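/- Let R be a commutative ring and let I = (f_1, …, f_n) be a finitely generated ideal of R. Then Loc(R/I)^⊥ = Loc(R_{f_1}, …, R_{f_n}) in D(R). -/

import Mathlib

open CategoryTheory CategoryTheory.Limits CategoryTheory.Pretriangulated ZeroObject

universe w w' v u

section TriangulatedDefs

variable {T : Type u} [Category.{v} T] [Preadditive T] [HasZeroObject T]
  [HasShift T ℤ] [∀ n : ℤ, (shiftFunctor T n).Additive] [Pretriangulated T]

/-- A localizing subcategory of a (pre)triangulated category, encoded as a set of
objects: it is closed under isomorphisms, contains the zero object, is stable
under shifts, closed under cones of distinguished triangles (hence a full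
triangulated subcategory), and closed under arbitrary small coproducts
(phrased via colimit cofans, so that no global existence of coproducts
is needed). -/
structure IsLocalizingSub (S : Set T) : Prop where
  zero_mem : (0 : T) ∈ S
  mem_of_iso : ∀ {x y : T}, (x ≅ y) → x ∈ S → y ∈ S
  shift_mem : ∀ (n : ℤ) {x : T}, x ∈ S → x⟦n⟧ ∈ S
  cone_mem : ∀ (Tr : Triangle T), Tr ∈ distinguishedTriangles →
    Tr.obj₁ ∈ S → Tr.obj₂ ∈ S → Tr.obj₃ ∈ S
  coprod_mem : ∀ {ι : Type w} (f : ι → T) (c : Cofan f), IsColimit c →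
    (∀ i, f i ∈ S) → c.pt ∈ S

/-- A colocalizing subcategory: as `IsLocalizingSub` but with products instead
of coproducts. -/
structure IsColocalizingSub (S : Set T) : Prop where
  zero_mem : (0 : T) ∈ S
  mem_of_iso : ∀ {x y : T}, (x ≅ y) → x ∈ S → y ∈ S
  shift_mem : ∀ (n : ℤ) {x : T}, x ∈ S → x⟦n⟧ ∈ S
  cone_mem : ∀ (Tr : Triangle T), Tr ∈ distinguishedTriangles →
    Tr.obj₁ ∈ S → Tr.obj₂ ∈ S → Tr.obj₃ ∈ S
  prod_mem : ∀ {ι : Type w} (f : ι → T) (c : Fan f), IsLimit c →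
    (∀ i, f i ∈ S) → c.pt ∈ S

/-- `Loc S`: the smallest localizing subcategory containing the set of
objects `S` (the intersection of all localizing subcategories containing it). -/
def Loc (S : Set T) : Set T :=
  ⋂₀ {L : Set T | IsLocalizingSub.{w} L ∧ S ⊆ L}

/-- The right orthogonal of a set of objects. -/
def rightOrth (C : Set T) : Set T :=
  {x : T | ∀ ⦃c : T⦄, c ∈ C → ∀ (g : c ⟶ x), g = 0}

end TriangulatedDefs

section CompactDefs

variable {T : Type u} [Category.{v} T] [Preadditive T]

/-- The canonical comparison map `⨁ᵢ Hom(x, fᵢ) →+ Hom(x, ∐ f)` associated to a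
cofan `c` on a family `f`. -/
noncomputable def cofanHomComparison {ι : Type w} (x : T) (f : ι → T) (c : Cofan f) :
    (Π₀ i, (x ⟶ f i)) →+ (x ⟶ c.pt) :=
  letI := Classical.decEq ι
  DFinsupp.sumAddHom (fun i => AddMonoidHom.mk' (fun φ => φ ≫ c.inj i)
    (fun φ ψ => Preadditive.add_comp _ _ _ φ ψ (c.inj i)))

/-- An object `x` is compact if `Hom(x, -)` commutes with arbitrary small
coproducts, i.e. for every colimit cofan on a family `f`, the canonical map
`⨁ᵢ Hom(x, fᵢ) → Hom(x, ∐ f)` is bijective. -/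
def IsCompactObj (x : T) : Prop :=
  ∀ ⦃ι : Type w⦄ (f : ι → T) (c : Cofan f), IsColimit c →
    Function.Bijective (cofanHomComparison x f c)

end CompactDefs

section DR

variable (R : Type u) [CommRing R] [HasDerivedCategory.{w'} (ModuleCat.{u} R)]

/-- The `R`-module `M`, regarded as an object of the derived category `D(R)`,
as a complex concentrated in degree `0`. -/
noncomputable def smod (M : ModuleCat.{u} R) : DerivedCategory (ModuleCat.{u} R) :=
  (DerivedCategory.singleFunctor (ModuleCat.{u} R) 0).obj M

end DR

set_option linter.unusedSectionVars false


section AbstractPart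

universe u₁ v₁

variable {T : Type u₁} [Category.{v₁} T] [Preadditive T] [HasZeroObject T]
  [HasShift T ℤ] [∀ n : ℤ, (shiftFunctor T n).Additive] [Pretriangulated T]

lemma subset_Loc (S : Set T) : S ⊆ Loc.{w} S := fun _ hx _ hL => hL.2 hx

lemma Loc_subset {S L : Set T} (hL : IsLocalizingSub.{w} L) (h : S ⊆ L) : Loc.{w} S ⊆ L :=
  fun _ hx => hx L ⟨hL, h⟩

lemma isLocalizingSub_Loc (S : Set T) : IsLocalizingSub.{w} (Loc.{w} S) where
  zero_mem := fun _ hL => hL.1.zero_mem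
  mem_of_iso := fun e hx L hL => hL.1.mem_of_iso e (hx L hL)
  shift_mem := fun n _ hx L hL => hL.1.shift_mem n (hx L hL)
  cone_mem := fun Tr hTr h1 h2 L hL => hL.1.cone_mem Tr hTr (h1 L hL) (h2 L hL)
  coprod_mem := fun f c hc h L hL => hL.1.coprod_mem f c hc (fun i => h i L hL)

lemma IsLocalizingSub.mem₂ {L : Set T} (hL : IsLocalizingSub.{w} L) (Tr : Triangle T)
    (hTr : Tr ∈ distTriang T) (h1 : Tr.obj₁ ∈ L) (h3 : Tr.obj₃ ∈ L) : Tr.obj₂ ∈ L :=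
  hL.cone_mem _ (inv_rot_of_distTriang _ hTr) (hL.shift_mem (-1) h3) h1

lemma IsLocalizingSub.mem₁ {L : Set T} (hL : IsLocalizingSub.{w} L) (Tr : Triangle T)
    (hTr : Tr ∈ distTriang T) (h2 : Tr.obj₂ ∈ L) (h3 : Tr.obj₃ ∈ L) : Tr.obj₁ ∈ L :=
  hL.mem₂ _ (inv_rot_of_distTriang _ hTr) (hL.shift_mem (-1) h3) h2

lemma IsLocalizingSub.inter {L L' : Set T} (hL : IsLocalizingSub.{w} L)
    (hL' : IsLocalizingSub.{w} L') : IsLocalizingSub.{w} (L ∩ L') where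
  zero_mem := ⟨hL.zero_mem, hL'.zero_mem⟩
  mem_of_iso := fun e hx => ⟨hL.mem_of_iso e hx.1, hL'.mem_of_iso e hx.2⟩
  shift_mem := fun n _ hx => ⟨hL.shift_mem n hx.1, hL'.shift_mem n hx.2⟩
  cone_mem := fun Tr hTr h1 h2 => ⟨hL.cone_mem Tr hTr h1.1 h2.1, hL'.cone_mem Tr hTr h1.2 h2.2⟩
  coprod_mem := fun f c hc h =>
    ⟨hL.coprod_mem f c hc (fun i => (h i).1), hL'.coprod_mem f c hc (fun i => (h i).2)⟩

/-- Vanishing of maps is compatible with shifts. -/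
lemma hom_zero_shift {C : Set T} (hC : ∀ (n : ℤ) {x : T}, x ∈ C → x⟦n⟧ ∈ C) {X : T}
    (h : ∀ Y ∈ C, ∀ g : X ⟶ Y, g = 0) (n : ℤ) {Y : T} (hY : Y ∈ C) (g : X⟦n⟧ ⟶ Y) : g = 0 := by
  apply (shiftFunctor T (-n)).map_injective
  have e : X ≅ X⟦n⟧⟦-n⟧ := (shiftEquiv T n).unitIso.app X
  rw [Functor.map_zero, ← cancel_epi e.hom, comp_zero]
  exact h _ (hC (-n) hY) _

/-- Vanishing of maps is compatible with shifts, on the right. -/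
lemma hom_zero_shift' {C : Set T} (hC : ∀ (n : ℤ) {x : T}, x ∈ C → x⟦n⟧ ∈ C) {Y : T}
    (h : ∀ X ∈ C, ∀ g : X ⟶ Y, g = 0) (n : ℤ) {X : T} (hX : X ∈ C) (g : X ⟶ Y⟦n⟧) : g = 0 := by
  apply (shiftFunctor T (-n)).map_injective
  have e : Y ≅ Y⟦n⟧⟦-n⟧ := (shiftEquiv T n).unitIso.app Y
  rw [Functor.map_zero, ← cancel_mono e.inv, zero_comp]
  exact h _ (hC (-n) hX) _

/-- left orthogonal -/
def leftOrthSet (C : Set T) : Set T := {X | ∀ Y ∈ C, ∀ g : X ⟶ Y, g = 0}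

lemma isLocalizingSub_leftOrthSet {C : Set T} (hC : ∀ (n : ℤ) {x : T}, x ∈ C → x⟦n⟧ ∈ C) :
    IsLocalizingSub.{w} (leftOrthSet C) where
  zero_mem := fun Y _ g => (isZero_zero T).eq_of_src _ _
  mem_of_iso := fun {x y} e hx Y hY g => by
    rw [← cancel_epi e.hom, comp_zero]; exact hx _ hY _
  shift_mem := fun n x hx Y hY g => hom_zero_shift hC hx n hY g
  cone_mem := fun Tr hTr h1 h2 Y hY g => by
    obtain ⟨k, rfl⟩ := Triangle.yoneda_exact₃ Tr hTr g (h2 _ hY _)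
    rw [hom_zero_shift hC h1 1 hY k, comp_zero]
  coprod_mem := fun f c hc h Y hY g => by
    apply Cofan.IsColimit.hom_ext hc
    intro i
    rw [comp_zero]
    exact h i Y hY _

lemma rightOrth_shift {C : Set T} (hC : ∀ (n : ℤ) {x : T}, x ∈ C → x⟦n⟧ ∈ C) (n : ℤ) {x : T}
    (hx : x ∈ rightOrth C) : x⟦n⟧ ∈ rightOrth C :=
  fun _ hc g => hom_zero_shift' hC (fun _ hX g => hx hX g) n hc g

lemma rightOrth_cone {C : Set T} (hC : ∀ (n : ℤ) {x : T}, x ∈ C → x⟦n⟧ ∈ C) (Tr : Triangle T)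
    (hTr : Tr ∈ distTriang T) (h1 : Tr.obj₁ ∈ rightOrth C) (h2 : Tr.obj₂ ∈ rightOrth C) :
    Tr.obj₃ ∈ rightOrth C := fun c hc g => by
  obtain ⟨k, rfl⟩ := Triangle.coyoneda_exact₃ Tr hTr g (rightOrth_shift hC 1 h1 hc _)
  rw [h2 hc k, zero_comp]

lemma rightOrth_mem₁ {C : Set T} (hC : ∀ (n : ℤ) {x : T}, x ∈ C → x⟦n⟧ ∈ C) (Tr : Triangle T)
    (hTr : Tr ∈ distTriang T) (h2 : Tr.obj₂ ∈ rightOrth C) (h3 : Tr.obj₃ ∈ rightOrth C) :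
    Tr.obj₁ ∈ rightOrth C :=
  rightOrth_cone hC _ (inv_rot_of_distTriang _ (inv_rot_of_distTriang _ hTr))
    (rightOrth_shift hC _ h2) (rightOrth_shift hC _ h3)

lemma Loc_shift (S : Set T) (n : ℤ) {x : T} (hx : x ∈ Loc.{w} S) : x⟦n⟧ ∈ Loc.{w} S :=
  (isLocalizingSub_Loc S).shift_mem n hx

/-- The shift of a colimit cofan is a colimit cofan. -/
noncomputable def isColimitShift {ι : Type w} {X : ι → T} {c : Cofan X} (hc : IsColimit c) (n : ℤ) :
    IsColimit (Cofan.mk (c.pt⟦n⟧) (fun i => (c.inj i)⟦n⟧')) :=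
  isColimitCofanMkObjOfIsColimit (shiftFunctor T n) X (fun i => c.inj i)
    (IsColimit.ofIsoColimit hc (Cofan.ext (Iso.refl _) (fun i => by simp)))

section mkLemmas

variable {X Y Z : T} {f : X ⟶ Y} {g : Y ⟶ Z} {h : Z ⟶ X⟦(1 : ℤ)⟧}

lemma dt₁₂ (hT : Triangle.mk f g h ∈ distTriang T) : f ≫ g = 0 :=
  comp_distTriang_mor_zero₁₂ _ hT

lemma dt₂₃ (hT : Triangle.mk f g h ∈ distTriang T) : g ≫ h = 0 :=
  comp_distTriang_mor_zero₂₃ _ hT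

lemma dt₃₁ (hT : Triangle.mk f g h ∈ distTriang T) : h ≫ f⟦(1 : ℤ)⟧' = 0 :=
  comp_distTriang_mor_zero₃₁ _ hT

lemma dt_y₂ (hT : Triangle.mk f g h ∈ distTriang T) {W : T} (x : Y ⟶ W) (hx : f ≫ x = 0) :
    ∃ y : Z ⟶ W, x = g ≫ y :=
  Triangle.yoneda_exact₂ _ hT x hx

lemma dt_y₃ (hT : Triangle.mk f g h ∈ distTriang T) {W : T} (x : Z ⟶ W) (hx : g ≫ x = 0) :
    ∃ y : X⟦(1 : ℤ)⟧ ⟶ W, x = h ≫ y :=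
  Triangle.yoneda_exact₃ _ hT x hx

lemma dt_c₁ (hT : Triangle.mk f g h ∈ distTriang T) {W : T} (x : W ⟶ X⟦(1 : ℤ)⟧)
    (hx : x ≫ f⟦(1 : ℤ)⟧' = 0) : ∃ y : W ⟶ Z, x = y ≫ h :=
  Triangle.coyoneda_exact₁ _ hT x hx

lemma dt_c₂ (hT : Triangle.mk f g h ∈ distTriang T) {W : T} (x : W ⟶ Y) (hx : x ≫ g = 0) :
    ∃ y : W ⟶ X, x = y ≫ f :=
  Triangle.coyoneda_exact₂ _ hT x hx

lemma dt_c₃ (hT : Triangle.mk f g h ∈ distTriang T) {W : T} (x : W ⟶ Z) (hx : x ≫ h = 0) :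
    ∃ y : W ⟶ Y, x = y ≫ g :=
  Triangle.coyoneda_exact₃ _ hT x hx

lemma dt_y₁ (hT : Triangle.mk f g h ∈ distTriang T) {W : T} (x : X⟦(1 : ℤ)⟧ ⟶ W)
    (hx : h ≫ x = 0) : ∃ y : Y⟦(1 : ℤ)⟧ ⟶ W, x = f⟦(1 : ℤ)⟧' ≫ y := by
  obtain ⟨y, hy⟩ := Triangle.yoneda_exact₃ _ (rot_of_distTriang _ hT) x hx
  change Y⟦(1 : ℤ)⟧ ⟶ W at y
  change x = (-f⟦(1 : ℤ)⟧') ≫ y at hy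
  refine ⟨-y, ?_⟩
  rw [hy, Preadditive.neg_comp, Preadditive.comp_neg]

lemma dt_complete {X' Y' Z' : T} {f' : X' ⟶ Y'} {g' : Y' ⟶ Z'} {h' : Z' ⟶ X'⟦(1 : ℤ)⟧}
    (hT : Triangle.mk f g h ∈ distTriang T) (hT' : Triangle.mk f' g' h' ∈ distTriang T)
    (a : X ⟶ X') (b : Y ⟶ Y') (hab : f ≫ b = a ≫ f') :
    ∃ c : Z ⟶ Z', g ≫ c = b ≫ g' ∧ h ≫ a⟦(1 : ℤ)⟧' = c ≫ h' :=
  complete_distinguished_triangle_morphism _ _ hT hT' a b hab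

end mkLemmas

section lin

variable {R : Type u} [CommRing R] [Linear R T] [∀ n : ℤ, (shiftFunctor T n).Linear R]

/-- The objects on which `f` acts invertibly. -/
def invSet (T : Type u₁) [Category.{v₁} T] [Preadditive T] [Linear R T] (f : R) : Set T :=
  {Y | IsIso (f • 𝟙 Y)}

lemma isLocalizingSub_invSet (f : R) : IsLocalizingSub.{w} (invSet T f) where
  zero_mem := ⟨0, (isZero_zero T).eq_of_src _ _, (isZero_zero T).eq_of_src _ _⟩
  mem_of_iso := fun {x y} e (hx : IsIso _) => by
    have : f • 𝟙 y = e.inv ≫ (f • 𝟙 x) ≫ e.hom := by simp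
    change IsIso _
    rw [this]; infer_instance
  shift_mem := fun n x (hx : IsIso _) => by
    have : f • 𝟙 (x⟦n⟧) = (f • 𝟙 x)⟦n⟧' := by simp [Functor.map_smul]
    change IsIso _
    rw [this]; infer_instance
  cone_mem := fun Tr hTr h1 h2 => by
    let φ : Tr ⟶ Tr :=
      { hom₁ := f • 𝟙 _
        hom₂ := f • 𝟙 _
        hom₃ := f • 𝟙 _
        comm₁ := by simp
        comm₂ := by simp
        comm₃ := by simp [Functor.map_smul] }
    exact isIso₃_of_isIso₁₂ φ hTr hTr h1 h2
  coprod_mem := fun {ι} g c hc h => by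
    have h' : ∀ i, IsIso (f • 𝟙 (g i)) := h
    refine ⟨Cofan.IsColimit.desc hc (fun i => inv (f • 𝟙 (g i)) ≫ c.inj i), ?_, ?_⟩
    · apply Cofan.IsColimit.hom_ext hc
      intro i
      have : (f • 𝟙 (g i)) ≫ (inv (f • 𝟙 (g i)) ≫ c.inj i) = c.inj i := by
        rw [← Category.assoc, IsIso.hom_inv_id, Category.id_comp]
      rw [← Category.assoc, Linear.comp_smul, Category.comp_id, Linear.smul_comp,
        Cofan.IsColimit.fac hc]
      rw [Linear.smul_comp, Category.id_comp] at this
      exact this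
    · apply Cofan.IsColimit.hom_ext hc
      intro i
      rw [← Category.assoc, Cofan.IsColimit.fac hc]
      have : (inv (f • 𝟙 (g i)) ≫ (f • 𝟙 (g i))) ≫ c.inj i = c.inj i := by
        rw [IsIso.inv_hom_id, Category.id_comp]
      simpa using this

lemma invSet_inj {f : R} {Y : T} (hY : Y ∈ invSet T f) {X : T} (g : X ⟶ Y) (h : f • g = 0) :
    g = 0 := by
  have : IsIso (f • 𝟙 Y) := hY
  rw [← cancel_mono (f • 𝟙 Y)]
  simpa using h

lemma invSet_surj {f : R} {Y : T} (hY : Y ∈ invSet T f) {X : T} (g : X ⟶ Y) :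
    ∃ g' : X ⟶ Y, f • g' = g := by
  have : IsIso (f • 𝟙 Y) := hY
  refine ⟨g ≫ inv (f • 𝟙 Y), ?_⟩
  have : (g ≫ inv (f • 𝟙 Y)) ≫ (f • 𝟙 Y) = g := by simp only [Category.assoc, IsIso.inv_hom_id, Category.comp_id]
  rw [Linear.comp_smul, Category.comp_id] at this
  exact this

/-- The `f`-torsion objects. -/
def torsSet (T : Type u₁) [Category.{v₁} T] [Preadditive T] [Linear R T] (f : R) : Set T :=
  {X | ∀ Y ∈ invSet T f, ∀ g : X ⟶ Y, g = 0}

lemma isLocalizingSub_torsSet (f : R) : IsLocalizingSub.{w} (torsSet T f) :=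
  isLocalizingSub_leftOrthSet (fun n _ hx => (isLocalizingSub_invSet.{w} f).shift_mem n hx)

lemma mem_torsSet_of_smul {f : R} {X : T} (h : f • 𝟙 X = 0) : X ∈ torsSet T f := fun Y hY g => by
  apply invSet_inj hY
  have : (f • 𝟙 X) ≫ g = 0 := by rw [h, zero_comp]
  simpa using this

lemma isZero_of_inv_tors {f : R} {X : T} (h : X ∈ invSet T f) (h' : X ∈ torsSet T f) :
    IsZero X := (IsZero.iff_id_eq_zero X).2 (h' X h _)

/-- A map which is universal for maps to `invSet T f`. -/
def IsUnivInv (f : R) {X E : T} (ρ : X ⟶ E) : Prop :=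
  ∀ Y ∈ invSet T f, (∀ h : X ⟶ Y, ∃ h' : E ⟶ Y, ρ ≫ h' = h) ∧
    (∀ h' : E ⟶ Y, ρ ≫ h' = 0 → h' = 0)

lemma mem_torsSet_of_isUnivInv {f : R} (Tr : Triangle T) (hTr : Tr ∈ distTriang T)
    (h : IsUnivInv f Tr.mor₂) : Tr.obj₁ ∈ torsSet T f := by
  intro Y hY k
  have hY1 := (isLocalizingSub_invSet.{0} f).shift_mem 1 hY
  have h0 : Tr.mor₃ ≫ k⟦1⟧' = 0 := by
    apply (h _ hY1).2
    rw [← Category.assoc, comp_distTriang_mor_zero₂₃ _ hTr, zero_comp]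
  obtain ⟨l, hl⟩ := Triangle.yoneda_exact₃ _ (rot_of_distTriang _ hTr) (k⟦1⟧') h0
  obtain ⟨l', rfl⟩ := (shiftFunctor T (1 : ℤ)).map_surjective l
  obtain ⟨l'', rfl⟩ := (h _ hY).1 l'
  apply (shiftFunctor T (1 : ℤ)).map_injective
  rw [hl, Functor.map_zero]
  have : (Tr.mor₁ ≫ Tr.mor₂)⟦(1 : ℤ)⟧' = 0 := by
    rw [comp_distTriang_mor_zero₁₂ _ hTr, Functor.map_zero]
  rw [Functor.map_comp] at this
  change (-(Tr.mor₁⟦(1 : ℤ)⟧')) ≫ (Tr.mor₂ ≫ l'')⟦(1 : ℤ)⟧' = 0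
  rw [Functor.map_comp, Preadditive.neg_comp, reassoc_of% this, zero_comp, neg_zero]

end lin

end AbstractPart

section Telescope

universe u₁ v₁

variable {T : Type u₁} [Category.{v₁} T] [Preadditive T] [HasZeroObject T]
  [HasShift T ℤ] [∀ n : ℤ, (shiftFunctor T n).Additive] [Pretriangulated T]

/-- A telescope (homotopy colimit) of a sequence. -/
structure Tel (A : ℕ → T) (s : ∀ n, A n ⟶ A (n + 1)) where
  c : Cofan (fun k : ULift.{w} ℕ => A k.down)
  hc : IsColimit c
  t : c.pt ⟶ c.pt
  ht : ∀ n, c.inj ⟨n⟩ ≫ t = s n ≫ c.inj ⟨n + 1⟩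
  H : T
  p : c.pt ⟶ H
  q : H ⟶ c.pt⟦(1 : ℤ)⟧
  dist : Triangle.mk (𝟙 _ - t) p q ∈ distTriang T

lemma Tel.exists [HasCoproducts.{w} T] (A : ℕ → T) (s : ∀ n, A n ⟶ A (n + 1)) :
    Nonempty (Tel.{w} A s) := by
  let hc := colimit.isColimit (Discrete.functor (fun k : ULift.{w} ℕ => A k.down))
  let c : Cofan (fun k : ULift.{w} ℕ => A k.down) := colimit.cocone _
  let t : c.pt ⟶ c.pt := Cofan.IsColimit.desc hc (fun k => s k.down ≫ c.inj ⟨k.down + 1⟩)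
  obtain ⟨H, p, q, h⟩ := distinguished_cocone_triangle (𝟙 _ - t)
  exact ⟨⟨c, hc, t, fun n => Cofan.IsColimit.fac hc _ _, H, p, q, h⟩⟩

variable {A : ℕ → T} {s : ∀ n, A n ⟶ A (n + 1)} (H : Tel.{w} A s)

/-- The structure maps. -/
def Tel.j (n : ℕ) : A n ⟶ H.H := H.c.inj ⟨n⟩ ≫ H.p

lemma Tel.phi_p : (𝟙 _ - H.t) ≫ H.p = 0 := comp_distTriang_mor_zero₁₂ _ H.dist

lemma Tel.t_p : H.t ≫ H.p = H.p := by
  have := H.phi_p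
  rw [Preadditive.sub_comp, Category.id_comp, sub_eq_zero] at this
  exact this.symm

lemma Tel.s_j (n : ℕ) : s n ≫ H.j (n + 1) = H.j n := by
  unfold Tel.j
  rw [← Category.assoc, ← H.ht, Category.assoc, H.t_p]

lemma Tel.extend {Y : T} (h : ∀ n, A n ⟶ Y) (hh : ∀ n, s n ≫ h (n + 1) = h n) :
    ∃ h' : H.H ⟶ Y, ∀ n, H.j n ≫ h' = h n := by
  obtain ⟨h', hh'⟩ := dt_y₂ H.dist
    (Cofan.IsColimit.desc H.hc (fun k => h k.down)) (by
      apply Cofan.IsColimit.hom_ext H.hc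
      rintro ⟨n⟩
      rw [Preadditive.sub_comp, Preadditive.comp_sub, Category.id_comp, ← Category.assoc, H.ht,
        Category.assoc, Cofan.IsColimit.fac, Cofan.IsColimit.fac, hh, sub_self, comp_zero])
  refine ⟨h', fun n => ?_⟩
  have : H.c.inj ⟨n⟩ ≫ H.p ≫ h' = h n := by
    rw [← Cofan.IsColimit.fac H.hc (fun k => h k.down) ⟨n⟩, hh']
  rw [← this, Tel.j, Category.assoc]

lemma Tel.mem {L : Set T} (hL : IsLocalizingSub.{w} L) (h : ∀ n, A n ∈ L) : H.H ∈ L := by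
  have := hL.coprod_mem _ _ H.hc (fun k => h k.down)
  exact hL.cone_mem _ H.dist this this

lemma Tel.hom_ext_zero {Y : T} (h : H.H ⟶ Y) (h0 : ∀ n, H.j n ≫ h = 0)
    (hl : ∀ a : ∀ n, (A n)⟦(1 : ℤ)⟧ ⟶ Y, ∃ b : ∀ n, (A n)⟦(1 : ℤ)⟧ ⟶ Y,
      ∀ n, b n - (s n)⟦(1 : ℤ)⟧' ≫ b (n + 1) = a n) : h = 0 := by
  obtain ⟨a, rfl⟩ := dt_y₃ H.dist h (by
      apply Cofan.IsColimit.hom_ext H.hc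
      rintro ⟨n⟩
      rw [comp_zero, ← h0 n, Tel.j, Category.assoc])
  change H.q ≫ a = 0
  let hc1 := isColimitShift H.hc 1
  obtain ⟨b, hb⟩ := hl (fun n => (H.c.inj ⟨n⟩)⟦(1 : ℤ)⟧' ≫ a)
  let β : H.c.pt⟦(1 : ℤ)⟧ ⟶ Y := Cofan.IsColimit.desc hc1 (fun k => b k.down)
  have fac : ∀ n, (H.c.inj ⟨n⟩)⟦(1 : ℤ)⟧' ≫ β = b n :=
    fun n => Cofan.IsColimit.fac hc1 (fun k => b k.down) ⟨n⟩
  have : a = (𝟙 _ - H.t)⟦(1 : ℤ)⟧' ≫ β := by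
    apply Cofan.IsColimit.hom_ext hc1
    rintro ⟨n⟩
    change (H.c.inj ⟨n⟩)⟦(1 : ℤ)⟧' ≫ a = (H.c.inj ⟨n⟩)⟦(1 : ℤ)⟧' ≫ _
    rw [← hb, ← Category.assoc, ← Functor.map_comp, Preadditive.comp_sub, Category.comp_id, H.ht,
      Functor.map_sub, Preadditive.sub_comp, Functor.map_comp, Category.assoc, fac, fac]
  have h31 : H.q ≫ (𝟙 _ - H.t)⟦(1 : ℤ)⟧' = 0 := comp_distTriang_mor_zero₃₁ _ H.dist
  rw [this, ← Category.assoc, h31, zero_comp]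

section lin

variable {R : Type u} [CommRing R] [Linear R T] [∀ n : ℤ, (shiftFunctor T n).Linear R]

section
variable {X : T} {f : R} (H : Tel.{w} (fun _ => X) (fun _ => f • 𝟙 X))

lemma Tel.mem_invSet : H.H ∈ invSet T f := by
  let t : H.c.pt ⟶ H.c.pt := Cofan.IsColimit.desc H.hc (fun k => H.c.inj ⟨k.down + 1⟩)
  have ht : H.t = f • t := by
    apply Cofan.IsColimit.hom_ext H.hc
    rintro ⟨n⟩
    rw [H.ht, Linear.comp_smul, Cofan.IsColimit.fac, Linear.smul_comp, Category.id_comp]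
  have comm : (𝟙 _ - H.t) ≫ t = t ≫ (𝟙 _ - H.t) := by
    rw [ht]; simp
  obtain ⟨τ, h1, h2⟩ := dt_complete H.dist H.dist t t comm
  change H.H ⟶ H.H at τ
  change H.p ≫ τ = t ≫ H.p at h1
  change H.q ≫ t⟦(1 : ℤ)⟧' = τ ≫ H.q at h2
  let e : H.H ⟶ H.H := f • τ - 𝟙 _
  have e1 : H.p ≫ e = 0 := by
    simp only [e, Preadditive.comp_sub, Linear.comp_smul, h1, Category.comp_id]
    rw [← Linear.smul_comp, ← ht, H.t_p, sub_self]
  have e2 : e ≫ H.q = 0 := by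
    simp only [e, Preadditive.sub_comp, Linear.smul_comp, ← h2, Category.id_comp]
    rw [← Linear.comp_smul, ← Functor.map_smul, ← ht]
    have h31 : H.q ≫ (𝟙 _ - H.t)⟦(1 : ℤ)⟧' = 0 := comp_distTriang_mor_zero₃₁ _ H.dist
    rw [Functor.map_sub, Preadditive.comp_sub, CategoryTheory.Functor.map_id, Category.comp_id, sub_eq_zero] at h31
    rw [← h31, sub_self]
  obtain ⟨a, ha⟩ := dt_y₃ H.dist e e1
  change e = H.q ≫ a at ha
  have ee : e ≫ e = 0 := by
    conv_lhs => enter [2]; rw [ha]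
    rw [← Category.assoc, e2, zero_comp]
  have hft : f • τ = 𝟙 _ + e := by simp [e]
  have hτ : (f • 𝟙 H.H) ≫ τ = 𝟙 _ + e := by simpa using hft
  have hτ' : τ ≫ (f • 𝟙 H.H) = 𝟙 _ + e := by simpa using hft
  have hi : (𝟙 _ + e) ≫ (𝟙 _ - e) = 𝟙 H.H := by simp [ee]
  have hi' : (𝟙 _ - e) ≫ (𝟙 _ + e) = 𝟙 H.H := by simp [ee]
  have h4 : (f • 𝟙 H.H) ≫ τ ≫ (𝟙 _ - e) = 𝟙 _ := by rw [← Category.assoc, hτ, hi]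
  have h5 : ((𝟙 _ - e) ≫ τ) ≫ (f • 𝟙 H.H) = 𝟙 _ := by rw [Category.assoc, hτ', hi']
  have : ((𝟙 _ - e) ≫ τ) = τ ≫ (𝟙 _ - e) := by
    have := congrArg (fun z => ((𝟙 _ - e) ≫ τ) ≫ z) h4
    simp only [← Category.assoc] at this h5
    rw [h5] at this
    simpa using this.symm
  exact ⟨τ ≫ (𝟙 _ - e), h4, by rw [← this, h5]⟩

lemma Tel.isUnivInv : IsUnivInv f (H.j 0) := by
  intro Y hY
  refine ⟨fun h => ?_, fun h' hh' => ?_⟩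
  · choose d hd using fun g : X ⟶ Y => invSet_surj hY g
    let b : ℕ → (X ⟶ Y) := fun n => Nat.rec h (fun _ x => d x) n
    obtain ⟨k, hk⟩ := H.extend b (fun n => by
      change _ ≫ d (b n) = b n
      rw [Linear.smul_comp, Category.id_comp, hd])
    exact ⟨k, hk 0⟩
  · apply H.hom_ext_zero
    · intro n
      induction n with
      | zero => exact hh'
      | succ n ih =>
        apply invSet_inj hY
        have := H.s_j n
        rw [Linear.smul_comp, Category.id_comp] at this
        rw [← Linear.smul_comp, this, ih]
    · intro a
      choose d hd using fun g : X⟦(1 : ℤ)⟧ ⟶ Y => invSet_surj hY g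
      let b : ℕ → (X⟦(1 : ℤ)⟧ ⟶ Y) := fun n => Nat.rec 0 (fun n x => d (x - a n)) n
      refine ⟨b, fun n => ?_⟩
      change b n - _ ≫ d (b n - a n) = a n
      rw [Functor.map_smul, CategoryTheory.Functor.map_id, Linear.smul_comp, Category.id_comp, hd, sub_sub_cancel]

end

/-- Every object has an `f`-localization triangle. -/
lemma exists_loc_triangle [HasCoproducts.{w} T] (f : R) (X : T) :
    ∃ Tr ∈ distTriang T, Tr.obj₂ = X ∧ Tr.obj₁ ∈ torsSet T f ∧ Tr.obj₃ ∈ invSet T f ∧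
      ∀ L : Set T, IsLocalizingSub.{w} L → X ∈ L → Tr.obj₁ ∈ L ∧ Tr.obj₃ ∈ L := by
  obtain ⟨H⟩ := Tel.exists.{w} (fun _ => X) (fun _ => f • 𝟙 X)
  obtain ⟨A, a, b, h⟩ := distinguished_cocone_triangle₁ (H.j 0)
  refine ⟨_, h, rfl, mem_torsSet_of_isUnivInv _ h H.isUnivInv, H.mem_invSet, fun L hL hX => ?_⟩
  have := H.mem hL (fun _ => hX)
  exact ⟨hL.mem₁ _ h hX this, this⟩

end lin

end Telescope

section FiltPart

universe u₁ v₁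

variable {T : Type u₁} [Category.{v₁} T] [Preadditive T] [HasZeroObject T]
  [HasShift T ℤ] [∀ n : ℤ, (shiftFunctor T n).Additive] [Pretriangulated T]

/-- A coproduct of distinguished triangles, up to isomorphism. -/
lemma coproduct_triangle {ι : Type w} {A Y E : ι → T} {a : ∀ i, A i ⟶ Y i} {b : ∀ i, Y i ⟶ E i}
    {d : ∀ i, E i ⟶ (A i)⟦(1 : ℤ)⟧} (hT : ∀ i, Triangle.mk (a i) (b i) (d i) ∈ distTriang T)
    {cA : Cofan A} (hA : IsColimit cA) {cY : Cofan Y} (hY : IsColimit cY)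
    {cE : Cofan E} (hE : IsColimit cE) {α : cA.pt ⟶ cY.pt} {E' : T} {p : cY.pt ⟶ E'}
    {q : E' ⟶ cA.pt⟦(1 : ℤ)⟧} (hα : ∀ i, cA.inj i ≫ α = a i ≫ cY.inj i)
    (h : Triangle.mk α p q ∈ distTriang T) : Nonempty (cE.pt ≅ E') := by
  choose θ hθ1 hθ2 using fun i => dt_complete (hT i) h (cA.inj i) (cY.inj i) (hα i).symm
  have inj : ∀ {W : T} (x : E' ⟶ W), (∀ i, θ i ≫ x = 0) → x = 0 := by
    intro W x hx
    have hp : p ≫ x = 0 := by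
      apply Cofan.IsColimit.hom_ext hY
      intro i
      rw [comp_zero, ← Category.assoc, ← hθ1, Category.assoc, hx, comp_zero]
    obtain ⟨y, rfl⟩ := dt_y₃ h x hp
    have hz : ∀ i, ∃ z, (cA.inj i)⟦(1 : ℤ)⟧' ≫ y = (a i)⟦(1 : ℤ)⟧' ≫ z := fun i =>
      dt_y₁ (hT i) _ (by rw [← Category.assoc, hθ2, Category.assoc, hx])
    choose z hz using hz
    have hA1 := isColimitShift hA 1
    have hY1 := isColimitShift hY 1
    let ζ : cY.pt⟦(1 : ℤ)⟧ ⟶ W := Cofan.IsColimit.desc hY1 z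
    have fac : ∀ i, (cY.inj i)⟦(1 : ℤ)⟧' ≫ ζ = z i := fun i => Cofan.IsColimit.fac hY1 z i
    have : y = α⟦(1 : ℤ)⟧' ≫ ζ := by
      apply Cofan.IsColimit.hom_ext hA1
      intro i
      change (cA.inj i)⟦(1 : ℤ)⟧' ≫ y = (cA.inj i)⟦(1 : ℤ)⟧' ≫ _
      rw [hz, ← Category.assoc, ← Functor.map_comp, hα, Functor.map_comp, Category.assoc, fac]
    rw [this, ← Category.assoc, dt₃₁ h, zero_comp]
  have surj : ∀ {W : T} (y : ∀ i, E i ⟶ W), ∃ x : E' ⟶ W, ∀ i, θ i ≫ x = y i := by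
    intro W y
    obtain ⟨x, hx⟩ := dt_y₂ h (Cofan.IsColimit.desc hY (fun i => b i ≫ y i)) (by
      apply Cofan.IsColimit.hom_ext hA
      intro i
      rw [← Category.assoc, hα, Category.assoc, Cofan.IsColimit.fac, ← Category.assoc,
        dt₁₂ (hT i), zero_comp, comp_zero])
    have hx' : ∀ i, b i ≫ θ i ≫ x = b i ≫ y i := fun i => by
      rw [← Category.assoc, hθ1, Category.assoc, ← hx, Cofan.IsColimit.fac]
    have hv : ∀ i, ∃ v, θ i ≫ x - y i = d i ≫ v := fun i =>
      dt_y₃ (hT i) _ (by rw [Preadditive.comp_sub, hx', sub_self])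
    choose v hv using hv
    have hA1 := isColimitShift hA 1
    let ν : cA.pt⟦(1 : ℤ)⟧ ⟶ W := Cofan.IsColimit.desc hA1 v
    have fac : ∀ i, (cA.inj i)⟦(1 : ℤ)⟧' ≫ ν = v i := fun i => Cofan.IsColimit.fac hA1 v i
    refine ⟨x - q ≫ ν, fun i => ?_⟩
    rw [Preadditive.comp_sub, ← Category.assoc, ← hθ2, Category.assoc, fac, ← hv, sub_sub_cancel]
  obtain ⟨x, hx⟩ := surj (fun i => cE.inj i)
  let Θ : cE.pt ⟶ E' := Cofan.IsColimit.desc hE θ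
  have fac : ∀ i, cE.inj i ≫ Θ = θ i := fun i => Cofan.IsColimit.fac hE θ i
  refine ⟨⟨Θ, x, ?_, ?_⟩⟩
  · apply Cofan.IsColimit.hom_ext hE
    intro i
    rw [← Category.assoc, fac, hx, Category.comp_id]
  · rw [← sub_eq_zero]
    apply inj
    intro i
    rw [Preadditive.comp_sub, ← Category.assoc, hx, fac, Category.comp_id, sub_self]

section lin

variable {R : Type u} [CommRing R] [Linear R T] [∀ n : ℤ, (shiftFunctor T n).Linear R]

/-- Objects filtered by objects on which the members of the list act invertibly. -/
def Filt (T : Type u₁) [Category.{v₁} T] [Preadditive T] [HasZeroObject T]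
    [HasShift T ℤ] [∀ n : ℤ, (shiftFunctor T n).Additive] [Pretriangulated T] [Linear R T] :
    List R → Set T
  | [] => {Y | IsZero Y}
  | f :: l => {Y | ∃ (A E : T) (a : A ⟶ Y) (b : Y ⟶ E) (d : E ⟶ A⟦(1 : ℤ)⟧),
      Triangle.mk a b d ∈ (distTriang T) ∧ A ∈ Filt T l ∧ E ∈ invSet T f}

lemma Filt_coprod [HasCoproducts.{w} T] (l : List R) {ι : Type w} (Y : ι → T) (c : Cofan Y)
    (hc : IsColimit c) (h : ∀ i, Y i ∈ Filt T l) : c.pt ∈ Filt T l := by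
  induction l generalizing Y with
  | nil =>
    change IsZero _
    rw [IsZero.iff_id_eq_zero]
    apply Cofan.IsColimit.hom_ext hc
    intro i
    exact IsZero.eq_of_src (h i) _ _
  | cons f l ih =>
    choose A E a b d hT hA hE using h
    have hcA := colimit.isColimit (Discrete.functor A)
    have hcE := colimit.isColimit (Discrete.functor E)
    let cA : Cofan A := colimit.cocone (Discrete.functor A)
    let cE : Cofan E := colimit.cocone (Discrete.functor E)
    let α : cA.pt ⟶ c.pt := Cofan.IsColimit.desc hcA (fun i => a i ≫ c.inj i)
    obtain ⟨E', p, q, h'⟩ := distinguished_cocone_triangle α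
    obtain ⟨e⟩ := coproduct_triangle hT (cA := cA) hcA hc (cE := cE) hcE (α := α)
      (fun i => Cofan.IsColimit.fac hcA _ i) h'
    refine ⟨_, _, _, _, _, h', ih A cA hcA hA, ?_⟩
    exact (isLocalizingSub_invSet.{w} f).mem_of_iso e
      ((isLocalizingSub_invSet.{w} f).coprod_mem E cE hcE hE)

/-- The right orthogonal of the torsion objects. -/
def Wset (T : Type u₁) [Category.{v₁} T] [Preadditive T] [HasZeroObject T]
    [HasShift T ℤ] [∀ n : ℤ, (shiftFunctor T n).Additive] [Pretriangulated T] [Linear R T]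
    (l : List R) : Set T := rightOrth {X : T | ∀ f ∈ l, X ∈ torsSet T f}

lemma torsAll_shift (l : List R) (n : ℤ) {x : T} (hx : x ∈ {X : T | ∀ f ∈ l, X ∈ torsSet T f}) :
    x⟦n⟧ ∈ {X : T | ∀ f ∈ l, X ∈ torsSet T f} :=
  fun f hf => (isLocalizingSub_torsSet.{0} f).shift_mem n (hx f hf)

lemma Filt_subset_Wset (l : List R) : Filt T l ⊆ Wset T l := by
  induction l with
  | nil => exact fun Y hY X hX g => IsZero.eq_of_tgt hY _ _
  | cons f l ih =>
    rintro Y ⟨A, E, a, b, d, hT, hA, hE⟩ X hX g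
    obtain ⟨g', rfl⟩ := dt_c₂ hT g (hX f (by simp) E hE _)
    rw [ih hA (fun f' hf' => hX f' (by simp [hf'])) g', zero_comp]

lemma mem_Filt [HasCoproducts.{w} T] (l : List R) (D V : Set T) (hD : IsLocalizingSub.{w} D)
    (hV : ∀ Tr ∈ distTriang T, Tr.obj₂ ∈ V → Tr.obj₃ ∈ V → Tr.obj₁ ∈ V)
    (hl : ∀ f ∈ l, invSet T f ⊆ V)
    (h0 : ∀ Y, Y ∈ D → Y ∈ V → (∀ f ∈ l, Y ∈ torsSet T f) → IsZero Y)
    (Y : T) (hYD : Y ∈ D) (hYV : Y ∈ V) : Y ∈ Filt T l := by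
  induction l generalizing D Y with
  | nil => exact h0 Y hYD hYV (by simp)
  | cons f l ih =>
    obtain ⟨Tr, hTr, rfl, h1, h3, hL⟩ := exists_loc_triangle.{w} f Y
    refine ⟨_, _, Tr.mor₁, Tr.mor₂, Tr.mor₃, hTr, ?_, h3⟩
    apply ih (D ∩ torsSet T f) (hD.inter (isLocalizingSub_torsSet.{w} f))
      (fun g hg => hl g (by simp [hg]))
    · intro Z hZ hZV hZt
      apply h0 Z hZ.1 hZV
      intro g hg
      rcases List.mem_cons.1 hg with rfl | hg
      · exact hZ.2
      · exact hZt g hg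
    · exact ⟨(hL D hD hYD).1, h1⟩
    · exact hV _ hTr hYV (hl f (by simp) h3)

lemma Filt_subset {L : Set T} (hL : IsLocalizingSub.{w} L) (l : List R)
    (h : ∀ f ∈ l, invSet T f ⊆ L) : Filt T l ⊆ L := by
  induction l with
  | nil => exact fun Y hY => hL.mem_of_iso (IsZero.iso (isZero_zero T) hY) hL.zero_mem
  | cons f l ih =>
    rintro Y ⟨A, E, a, b, d, hT, hA, hE⟩
    exact hL.mem₂ _ hT (ih (fun g hg => h g (by simp [hg])) hA) (h f (by simp) hE)

lemma invSet_subset_Wset (l : List R) (f : R) (hf : f ∈ l) : invSet T f ⊆ Wset T l :=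
  fun Y hY _ hX g => hX f hf Y hY g

lemma Wset_eq_Filt [HasCoproducts.{w} T] (l : List R) : Wset T l = Filt T l := by
  apply subset_antisymm _ (Filt_subset_Wset l)
  intro Y hY
  refine mem_Filt.{w} l Set.univ (Wset T l) ⟨trivial, fun _ _ => trivial, fun _ _ _ => trivial,
    fun _ _ _ _ => trivial, fun _ _ _ _ => trivial⟩
    (fun Tr hTr h2 h3 => rightOrth_mem₁ (torsAll_shift l) Tr hTr h2 h3)
    (invSet_subset_Wset l) (fun Y _ hY h => ?_) Y trivial hY
  rw [IsZero.iff_id_eq_zero]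
  exact hY h _

lemma isLocalizingSub_Wset [HasCoproducts.{w} T] (l : List R) : IsLocalizingSub.{w} (Wset T l) where
  zero_mem := fun _ _ _ => (isZero_zero T).eq_of_tgt _ _
  mem_of_iso := fun e hx X hX g => by
    rw [← cancel_mono e.inv, zero_comp]; exact hx hX _
  shift_mem := fun n _ hx => rightOrth_shift (torsAll_shift l) n hx
  cone_mem := fun Tr hTr h1 h2 => rightOrth_cone (torsAll_shift l) Tr hTr h1 h2
  coprod_mem := fun Y c hc h => by
    rw [Wset_eq_Filt.{w}] at h ⊢
    exact Filt_coprod l Y c hc h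

end lin

end FiltPart

section CellPart

universe u₁ v₁

variable {T : Type u₁} [Category.{v₁} T] [Preadditive T] [HasZeroObject T]
  [HasShift T ℤ] [∀ n : ℤ, (shiftFunctor T n).Additive] [Pretriangulated T]

/-- A family of compact generators, stable under shifts. -/
structure IsTestFamily (P : ℤ → T) : Prop where
  zero : ∀ X, (∀ m (g : P m ⟶ X), g = 0) → IsZero X
  small : ∀ {ι : Type w} (X : ι → T) (c : Cofan X) (_ : IsColimit c) (m : ℤ) (g : P m ⟶ c.pt),
    ∃ (F : Finset ι) (y : ∀ i, P m ⟶ X i), g = ∑ i ∈ F, y i ≫ c.inj i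
  sm : ∀ m X, Small.{w} (P m ⟶ X)
  shift : ∀ m, Nonempty (P m ≅ (P (m + 1))⟦(1 : ℤ)⟧)

section
variable {A : ℕ → T} {s : ∀ n, A n ⟶ A (n + 1)} (H : Tel.{w} A s)

/-- Projections. -/
noncomputable def Tel.pr (n : ℕ) : H.c.pt ⟶ A n :=
  Cofan.IsColimit.desc H.hc (fun k => if h : k.down = n then eqToHom (by rw [h]) else 0)

lemma Tel.inj_pr (n : ℕ) : H.c.inj ⟨n⟩ ≫ H.pr n = 𝟙 _ := by
  rw [Tel.pr, Cofan.IsColimit.fac]; simp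

lemma Tel.inj_pr_ne (n m : ℕ) (h : n ≠ m) : H.c.inj ⟨n⟩ ≫ H.pr m = 0 := by
  rw [Tel.pr, Cofan.IsColimit.fac]; simp [h]

lemma Tel.t_pr_zero : H.t ≫ H.pr 0 = 0 := by
  apply Cofan.IsColimit.hom_ext H.hc
  rintro ⟨n⟩
  rw [← Category.assoc, H.ht, Category.assoc, H.inj_pr_ne _ _ (by simp), comp_zero, comp_zero]

lemma Tel.t_pr_succ (n : ℕ) : H.t ≫ H.pr (n + 1) = H.pr n ≫ s n := by
  apply Cofan.IsColimit.hom_ext H.hc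
  rintro ⟨k⟩
  rw [← Category.assoc, H.ht, Category.assoc]
  by_cases h : k = n
  · subst h
    rw [H.inj_pr, ← Category.assoc, H.inj_pr, Category.comp_id, Category.id_comp]
  · rw [H.inj_pr_ne _ _ (by simpa using h), ← Category.assoc, H.inj_pr_ne _ _ h, comp_zero,
      zero_comp]

variable {P : ℤ → T}

lemma Tel.phi_inj (hP : IsTestFamily.{w} P) (m : ℤ) (x : P m ⟶ H.c.pt) (hx : x ≫ (𝟙 _ - H.t) = 0) : x = 0 := by
  have hx' : x = x ≫ H.t := by
    rw [Preadditive.comp_sub, Category.comp_id, sub_eq_zero] at hx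
    exact hx
  have h : ∀ n, x ≫ H.pr n = 0 := by
    intro n
    induction n with
    | zero => rw [hx', Category.assoc, H.t_pr_zero, comp_zero]
    | succ n ih => rw [hx', Category.assoc, H.t_pr_succ, ← Category.assoc, ih, zero_comp]
  obtain ⟨F, y, hy⟩ := hP.small _ _ H.hc m x
  rw [hy]
  apply Finset.sum_eq_zero
  rintro ⟨n⟩ hn
  have := h n
  rw [hy, Preadditive.sum_comp, Finset.sum_eq_single_of_mem _ hn] at this
  · rw [Category.assoc, H.inj_pr, Category.comp_id] at this
    rw [this, zero_comp]
  · rintro ⟨k⟩ _ hk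
    rw [Category.assoc, H.inj_pr_ne _ _ (by simpa using hk), comp_zero]

lemma IsTestFamily.shift_inj (hP : IsTestFamily.{w} P) {X Y : T} (φ : X ⟶ Y)
    (h : ∀ m (x : P m ⟶ X), x ≫ φ = 0 → x = 0) (m : ℤ) (x : P m ⟶ X⟦(1 : ℤ)⟧)
    (hx : x ≫ φ⟦(1 : ℤ)⟧' = 0) : x = 0 := by
  obtain ⟨e⟩ := hP.shift m
  obtain ⟨x', hx'⟩ := (shiftFunctor T (1 : ℤ)).map_surjective (e.inv ≫ x)
  have h1 : x = e.hom ≫ x'⟦(1 : ℤ)⟧' := by rw [hx', Iso.hom_inv_id_assoc]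
  have h2 : x' ≫ φ = 0 := by
    apply (shiftFunctor T (1 : ℤ)).map_injective
    rw [Functor.map_comp, hx', Category.assoc, hx, comp_zero, Functor.map_zero]
  rw [h1, h _ x' h2, Functor.map_zero, comp_zero]

lemma Tel.lift_le {X : T} {n N : ℕ} (h : n ≤ N) (y : X ⟶ A n) :
    ∃ y' : X ⟶ A N, y ≫ H.j n = y' ≫ H.j N := by
  induction N, h using Nat.le_induction with
  | base => exact ⟨y, rfl⟩
  | succ N _ ih =>
    obtain ⟨y', hy'⟩ := ih
    exact ⟨y' ≫ s N, by rw [hy', Category.assoc, H.s_j]⟩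

lemma Tel.factor (hP : IsTestFamily.{w} P) (m : ℤ) (g : P m ⟶ H.H) : ∃ (N : ℕ) (y : P m ⟶ A N), g = y ≫ H.j N := by
  have h0 : g ≫ H.q = 0 := by
    apply hP.shift_inj (𝟙 _ - H.t) (fun m x hx => H.phi_inj hP m x hx)
    rw [Category.assoc, dt₃₁ H.dist, comp_zero]
  obtain ⟨g', rfl⟩ := dt_c₃ H.dist g h0
  obtain ⟨F, y, rfl⟩ := hP.small _ _ H.hc m g'
  have hN : ∀ i ∈ F, i.down ≤ F.sup ULift.down := fun i hi => Finset.le_sup (f := ULift.down) hi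
  have : ∀ i : ULift ℕ, ∃ y' : P m ⟶ A (F.sup ULift.down), i ∈ F →
      y i ≫ H.j i.down = y' ≫ H.j _ := by
    intro i
    by_cases hi : i ∈ F
    · obtain ⟨y', hy'⟩ := H.lift_le (hN i hi) (y i)
      exact ⟨y', fun _ => hy'⟩
    · exact ⟨0, fun h => absurd h hi⟩
  choose y' hy' using this
  refine ⟨_, ∑ i ∈ F, y' i, ?_⟩
  rw [Preadditive.sum_comp, Preadditive.sum_comp]
  refine Finset.sum_congr rfl (fun i hi => ?_)
  rw [← hy' i hi, Tel.j, Category.assoc]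

lemma Tel.isZero (hP : IsTestFamily.{w} P) (h : ∀ (m : ℤ) (n : ℕ), ∃ N, n ≤ N ∧
    ∀ z : P m ⟶ A N, z = 0) : IsZero H.H := by
  apply hP.zero
  intro m g
  obtain ⟨n, y, rfl⟩ := H.factor hP m g
  obtain ⟨N, hN, hz⟩ := h m n
  obtain ⟨y', hy'⟩ := H.lift_le hN y
  rw [hy', hz y', zero_comp]

lemma IsTestFamily.isIso (hP : IsTestFamily.{w} P) {X Y : T} (φ : X ⟶ Y) (h1 : ∀ m (x : P m ⟶ X), x ≫ φ = 0 → x = 0)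
    (h2 : ∀ m (y : P m ⟶ Y), ∃ x : P m ⟶ X, x ≫ φ = y) : IsIso φ := by
  obtain ⟨Z, b, d, hT⟩ := distinguished_cocone_triangle φ
  have : IsZero Z := by
    apply hP.zero
    intro m z
    have h0 : z ≫ d = 0 := by
      apply hP.shift_inj φ h1
      rw [Category.assoc, dt₃₁ hT, comp_zero]
    obtain ⟨y, rfl⟩ := dt_c₃ hT z h0
    obtain ⟨x, rfl⟩ := h2 m y
    rw [Category.assoc, dt₁₂ hT, comp_zero]
  exact (Triangle.isZero₃_iff_isIso₁ _ hT).1 this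

end

section lin

variable {R : Type u} [CommRing R] [Linear R T] [∀ n : ℤ, (shiftFunctor T n).Linear R]
  [HasCoproducts.{w} T]

lemma exists_cell {P : ℤ → T} (hP : IsTestFamily.{w} P) {f : R} {G : ℤ → T} (ρ : ∀ m, P m ⟶ G m)
    (hρ : ∀ m, IsUnivInv f (ρ m)) {L : Set T} (hL : IsLocalizingSub.{w} L) (hG : ∀ m, G m ∈ L)
    (Y : T) (p : ∀ m, (P m ⟶ Y) → Prop) :
    ∃ (B : T) (ξ : B ⟶ Y), B ∈ L ∧ (Y ∈ invSet T f → (∀ m x, p m x → ∃ z, x = z ≫ ξ) ∧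
      ∀ (Z : T), Z ∈ invSet T f → ∀ a : Y ⟶ Z, (∀ m x, p m x → x ≫ a = 0) → ξ ≫ a = 0) := by
  by_cases hY : Y ∈ invSet T f
  swap
  · exact ⟨0, 0, hL.zero_mem, fun h => absurd h hY⟩
  have := hP.sm
  let ι : Type w := Σ m : ℤ, Shrink.{w} {x : P m ⟶ Y // p m x}
  let x : ∀ i : ι, P i.1 ⟶ Y := fun i => ((equivShrink _).symm i.2).1
  have hx : ∀ i : ι, p _ (x i) := fun i => ((equivShrink _).symm i.2).2
  let hc := colimit.isColimit (Discrete.functor (fun i : ι => G i.1))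
  let c : Cofan (fun i : ι => G i.1) := colimit.cocone (Discrete.functor (fun i : ι => G i.1))
  choose ξ hξ using fun i => (hρ _ _ hY).1 (x i)
  refine ⟨c.pt, Cofan.IsColimit.desc hc ξ, hL.coprod_mem _ c hc (fun i => hG i.1), fun _ => ⟨?_, ?_⟩⟩
  · intro m y hy
    let i : ι := ⟨m, equivShrink _ ⟨y, hy⟩⟩
    have hi : x i = y := by simp [x, i]
    refine ⟨ρ m ≫ c.inj i, ?_⟩
    have := Cofan.IsColimit.fac hc ξ i
    rw [Category.assoc, ← hi, ← hξ i]
    exact congrArg (fun z => ρ m ≫ z) this.symm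
  · intro Z hZ a ha
    apply Cofan.IsColimit.hom_ext hc
    intro i
    rw [comp_zero, ← Category.assoc, Cofan.IsColimit.fac]
    apply (hρ _ _ hZ).2
    rw [← Category.assoc, hξ, ha _ _ (hx i)]

lemma invSet_subset_of_univInv {P : ℤ → T} (hP : IsTestFamily.{w} P) {f : R} {G : ℤ → T}
    (ρ : ∀ m, P m ⟶ G m) (hρ : ∀ m, IsUnivInv f (ρ m)) (hGf : ∀ m, G m ∈ invSet T f)
    {L₀ : Set T} (hL₀ : IsLocalizingSub.{w} L₀) (hG₀ : ∀ m, G m ∈ L₀) : invSet T f ⊆ L₀ := by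
  intro Y hY
  let L := L₀ ∩ invSet T f
  have hL : IsLocalizingSub.{w} L := hL₀.inter (isLocalizingSub_invSet.{w} f)
  have hG : ∀ m, G m ∈ L := fun m => ⟨hG₀ m, hGf m⟩
  have step : ∀ S : {p : Σ A : T, (A ⟶ Y) // p.1 ∈ L}, ∃ S' : {p : Σ A : T, (A ⟶ Y) // p.1 ∈ L},
      ∃ s : S.1.1 ⟶ S'.1.1, s ≫ S'.1.2 = S.1.2 ∧
        ∀ m (x : P m ⟶ S.1.1), x ≫ S.1.2 = 0 → x ≫ s = 0 := by
    rintro ⟨⟨A, a⟩, hA⟩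
    change A ∈ L at hA
    obtain ⟨B, ξ, hB, hh⟩ := exists_cell hP ρ hρ hL hG A (fun m x => x ≫ a = 0)
    obtain ⟨h1, h2⟩ := hh hA.2
    obtain ⟨A', s, d, hT⟩ := distinguished_cocone_triangle ξ
    obtain ⟨a', ha'⟩ := dt_y₂ hT a (h2 Y hY a (fun _ _ h => h))
    refine ⟨⟨⟨A', a'⟩, hL.cone_mem _ hT hB hA⟩, s, ha'.symm, ?_⟩
    intro m x hx
    obtain ⟨z, rfl⟩ := h1 m x hx
    rw [Category.assoc, dt₁₂ hT, comp_zero]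
  obtain ⟨B, ξ, hB, hh⟩ := exists_cell hP ρ hρ hL hG Y (fun _ _ => True)
  have hξ := (hh hY).1
  choose nxt s hs1 hs2 using step
  let S : ℕ → {p : Σ A : T, (A ⟶ Y) // p.1 ∈ L} := fun n => Nat.rec ⟨⟨B, ξ⟩, hB⟩ (fun _ x => nxt x) n
  let A : ℕ → T := fun n => (S n).1.1
  let a : ∀ n, A n ⟶ Y := fun n => (S n).1.2
  let t : ∀ n, A n ⟶ A (n + 1) := fun n => s (S n)
  have ht1 : ∀ n, t n ≫ a (n + 1) = a n := fun n => hs1 (S n)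
  have ht2 : ∀ n m (x : P m ⟶ A n), x ≫ a n = 0 → x ≫ t n = 0 := fun n => hs2 (S n)
  obtain ⟨H⟩ := Tel.exists.{w} A t
  obtain ⟨h, hh⟩ := H.extend a ht1
  have : IsIso h := by
    apply hP.isIso
    · intro m x hx
      obtain ⟨N, y, rfl⟩ := H.factor hP m x
      rw [Category.assoc, hh] at hx
      rw [← H.s_j, ← Category.assoc, ht2 N m y hx, zero_comp]
    · intro m y
      obtain ⟨z, hz⟩ := hξ m y trivial
      refine ⟨z ≫ H.j 0, ?_⟩
      rw [Category.assoc, hh, hz]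
      rfl
  exact hL₀.mem_of_iso (asIso h) (H.mem hL₀ (fun n => (S n).2.1))

end lin

end CellPart

section ElemPart

variable {R : Type u} [CommRing R]

/-- Cochain complexes of modules. -/
abbrev CC (R : Type u) [CommRing R] := CochainComplex (ModuleCat.{u} R) ℤ

lemma cc_exists_cycle (K : CC R) (n : ℤ) (x : K.X n) (hx : K.d n (n + 1) x = 0) :
    ∃ z : K.cycles n, K.iCycles n z = x := by
  let φ : ModuleCat.of R R ⟶ K.X n := ModuleCat.ofHom (LinearMap.toSpanSingleton R _ x)
  have hφ : φ ≫ K.d n (n + 1) = 0 := by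
    ext
    simpa [φ] using hx
  refine ⟨K.liftCycles φ (n + 1) (by simp) hφ (1 : R), ?_⟩
  rw [← ConcreteCategory.comp_apply, HomologicalComplex.liftCycles_i]
  simp [φ]

lemma cc_d_iCycles (K : CC R) (n : ℤ) (z : K.cycles n) : K.d n (n + 1) (K.iCycles n z) = 0 := by
  rw [← ConcreteCategory.comp_apply, HomologicalComplex.iCycles_d]; simp

lemma cc_homologyπ_eq_zero_iff (K : CC R) (n : ℤ) (z : K.cycles n) :
    K.homologyπ n z = 0 ↔ ∃ w : K.X (n - 1), K.iCycles n z = K.d (n - 1) n w := by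
  have hex : (ShortComplex.mk (K.toCycles (n - 1) n) (K.homologyπ n) (by simp)).Exact :=
    ShortComplex.exact_of_g_is_cokernel _ (K.homologyIsCokernel (n - 1) n (by simp))
  constructor
  · intro h
    obtain ⟨w, hw⟩ := (ShortComplex.moduleCat_exact_iff _).1 hex z h
    change K.toCycles (n - 1) n w = z at hw
    refine ⟨w, ?_⟩
    rw [← hw, ← ConcreteCategory.comp_apply, HomologicalComplex.toCycles_i]
  · rintro ⟨w, hw⟩
    have : z = K.toCycles (n - 1) n w := by
      apply (ModuleCat.mono_iff_injective (K.iCycles n)).1 inferInstance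
      rw [hw, ← ConcreteCategory.comp_apply, HomologicalComplex.toCycles_i]
    rw [this, ← ConcreteCategory.comp_apply, HomologicalComplex.toCycles_comp_homologyπ]; simp

lemma cc_homologyπ_surj (K : CC R) (n : ℤ) : Function.Surjective (K.homologyπ n) :=
  (ModuleCat.epi_iff_surjective _).1 inferInstance

lemma cc_homologyMap_π {K L : CC R} (f : K ⟶ L) (n : ℤ) (z : K.cycles n) :
    HomologicalComplex.homologyMap f n (K.homologyπ n z) =
      L.homologyπ n (HomologicalComplex.cyclesMap f n z) := by
  rw [← ConcreteCategory.comp_apply, HomologicalComplex.homologyπ_naturality,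
    ConcreteCategory.comp_apply]

lemma cc_cyclesMap_i {K L : CC R} (f : K ⟶ L) (n : ℤ) (z : K.cycles n) :
    L.iCycles n (HomologicalComplex.cyclesMap f n z) = f.f n (K.iCycles n z) := by
  rw [← ConcreteCategory.comp_apply, HomologicalComplex.cyclesMap_i,
    ConcreteCategory.comp_apply]

lemma cc_comm {K L : CC R} (f : K ⟶ L) (n m : ℤ) (x : K.X n) :
    L.d n m (f.f n x) = f.f m (K.d n m x) := by
  rw [← ConcreteCategory.comp_apply, f.comm, ConcreteCategory.comp_apply]

/-- Elementwise quasi-isomorphism. -/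
def ElemQI {K L : CC R} (f : K ⟶ L) : Prop := ∀ n : ℤ,
  (∀ x : K.X n, K.d n (n + 1) x = 0 → (∃ y : L.X (n - 1), f.f n x = L.d (n - 1) n y) →
    ∃ w : K.X (n - 1), x = K.d (n - 1) n w) ∧
  (∀ y : L.X n, L.d n (n + 1) y = 0 → ∃ (x : K.X n) (w : L.X (n - 1)), K.d n (n + 1) x = 0 ∧
    y = f.f n x + L.d (n - 1) n w)

lemma quasiIso_iff_elemQI {K L : CC R} (f : K ⟶ L) : QuasiIso f ↔ ElemQI f := by
  rw [quasiIso_iff]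
  refine forall_congr' fun n => ?_
  rw [quasiIsoAt_iff_isIso_homologyMap, ConcreteCategory.isIso_iff_bijective]
  constructor
  · rintro ⟨hi, hs⟩
    constructor
    · rintro x hx ⟨y, hy⟩
      obtain ⟨z, rfl⟩ := cc_exists_cycle K n x hx
      rw [← cc_homologyπ_eq_zero_iff]
      apply hi
      rw [cc_homologyMap_π, map_zero, cc_homologyπ_eq_zero_iff]
      exact ⟨y, by rw [cc_cyclesMap_i, hy]⟩
    · intro y hy
      obtain ⟨z, rfl⟩ := cc_exists_cycle L n y hy
      obtain ⟨a, ha⟩ := hs (L.homologyπ n z)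
      obtain ⟨b, rfl⟩ := cc_homologyπ_surj K n a
      rw [cc_homologyMap_π, ← sub_eq_zero, ← map_sub, cc_homologyπ_eq_zero_iff] at ha
      obtain ⟨w, hw⟩ := ha
      refine ⟨K.iCycles n b, -w, cc_d_iCycles _ _ _, ?_⟩
      rw [map_neg, ← hw, map_sub, cc_cyclesMap_i]
      abel
  · rintro ⟨h1, h2⟩
    constructor
    · rw [injective_iff_map_eq_zero]
      intro a ha
      obtain ⟨b, rfl⟩ := cc_homologyπ_surj K n a
      rw [cc_homologyMap_π, cc_homologyπ_eq_zero_iff, cc_cyclesMap_i] at ha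
      rw [cc_homologyπ_eq_zero_iff]
      exact h1 _ (cc_d_iCycles _ _ _) ha
    · intro a
      obtain ⟨b, rfl⟩ := cc_homologyπ_surj L n a
      obtain ⟨x, w, hx, hw⟩ := h2 _ (cc_d_iCycles _ _ b)
      obtain ⟨z, rfl⟩ := cc_exists_cycle K n x hx
      refine ⟨K.homologyπ n z, ?_⟩
      rw [cc_homologyMap_π, ← sub_eq_zero, ← map_sub, cc_homologyπ_eq_zero_iff]
      refine ⟨-w, ?_⟩
      rw [map_sub, hw, cc_cyclesMap_i, map_neg]
      abel

open DirectSum in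
/-- Direct sum of complexes. -/
noncomputable def dsC {ι : Type u} (K : ι → CC R) : CC R where
  X n := ModuleCat.of R (⨁ i, (K i).X n)
  d n m := ModuleCat.ofHom (DirectSum.lmap (fun i => ((K i).d n m).hom))
  shape n m h := by
    apply ModuleCat.hom_ext
    apply LinearMap.ext
    intro x
    apply DFinsupp.ext
    intro i
    change (K i).d n m (x i) = 0
    rw [(K i).shape n m h]; rfl
  d_comp_d' n m k _ _ := by
    apply ModuleCat.hom_ext
    apply LinearMap.ext
    intro x
    apply DFinsupp.ext
    intro i
    change (K i).d m k ((K i).d n m (x i)) = 0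
    rw [← ConcreteCategory.comp_apply, (K i).d_comp_d]; rfl

open DirectSum

lemma dsC_ext {ι : Type u} {K : ι → CC R} {n : ℤ} {x y : (dsC K).X n}
    (h : ∀ i, (show ⨁ i, (K i).X n from x) i = (show ⨁ i, (K i).X n from y) i) : x = y :=
  DFinsupp.ext h

/-- components -/
def dsCcomp {ι : Type u} {K : ι → CC R} {n : ℤ} (x : (dsC K).X n) (i : ι) : (K i).X n :=
  (show ⨁ i, (K i).X n from x) i

lemma dsCcomp_add {ι : Type u} {K : ι → CC R} {n : ℤ} (x y : (dsC K).X n) (i : ι) :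
    dsCcomp (x + y) i = dsCcomp x i + dsCcomp y i := rfl

lemma dsCcomp_zero {ι : Type u} {K : ι → CC R} {n : ℤ} (i : ι) :
    dsCcomp (0 : (dsC K).X n) i = 0 := rfl

lemma dsCcomp_d {ι : Type u} {K : ι → CC R} {n m : ℤ} (x : (dsC K).X n) (i : ι) :
    dsCcomp ((dsC K).d n m x) i = (K i).d n m (dsCcomp x i) := rfl

/-- The map of direct sums. -/
noncomputable def dsCmap {ι : Type u} {K L : ι → CC R} (f : ∀ i, K i ⟶ L i) : dsC K ⟶ dsC L where
  f n := ModuleCat.ofHom (DirectSum.lmap (fun i => ((f i).f n).hom))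
  comm' n m _ := by
    ext x
    apply DFinsupp.ext
    intro i
    exact cc_comm (f i) n m _

lemma dsCcomp_map {ι : Type u} {K L : ι → CC R} (f : ∀ i, K i ⟶ L i) {n : ℤ} (x : (dsC K).X n)
    (i : ι) : dsCcomp ((dsCmap f).f n x) i = (f i).f n (dsCcomp x i) := rfl

open Classical in
/-- The inclusions. -/
noncomputable def dsCinj {ι : Type u} (K : ι → CC R) (i : ι) : K i ⟶ dsC K where
  f n := ModuleCat.ofHom (DirectSum.lof R ι (fun i => (K i).X n) i)
  comm' n m _ := by
    ext x
    change DirectSum.lmap (fun i => ((K i).d n m).hom) (DirectSum.lof R ι _ i x) =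
      DirectSum.lof R ι _ i ((K i).d n m x)
    rw [DirectSum.lmap_lof]

open Classical in
lemma dsC_hom_ext' {ι : Type u} {K : ι → CC R} {n : ℤ} {M : ModuleCat.{u} R}
    {f g : (dsC K).X n ⟶ M} (h : ∀ i, (dsCinj K i).f n ≫ f = (dsCinj K i).f n ≫ g) : f = g := by
  apply ModuleCat.hom_ext
  apply DirectSum.linearMap_ext
  intro i
  exact congrArg ModuleCat.Hom.hom (h i)

open Classical in
/-- Descent, in each degree. -/
noncomputable def dsCdescX {ι : Type u} {K : ι → CC R} {n : ℤ} {M : ModuleCat.{u} R}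
    (f : ∀ i, (K i).X n ⟶ M) : (dsC K).X n ⟶ M :=
  ModuleCat.ofHom (DirectSum.toModule R ι M (fun i => (f i).hom))

open Classical in
lemma dsCinj_descX {ι : Type u} {K : ι → CC R} {n : ℤ} {M : ModuleCat.{u} R}
    (f : ∀ i, (K i).X n ⟶ M) (i : ι) : (dsCinj K i).f n ≫ dsCdescX f = f i := by
  apply ModuleCat.hom_ext
  apply LinearMap.ext
  intro x
  change DirectSum.toModule R ι M (fun i => (f i).hom)
    (DirectSum.lof R ι (fun i => (K i).X n) i x) = _
  rw [DirectSum.toModule_lof]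

/-- Descent. -/
noncomputable def dsCdesc {ι : Type u} {K : ι → CC R} {L : CC R} (f : ∀ i, K i ⟶ L) :
    dsC K ⟶ L where
  f n := dsCdescX (fun i => (f i).f n)
  comm' n m _ := by
    apply dsC_hom_ext'
    intro i
    rw [← Category.assoc, dsCinj_descX, ← Category.assoc, (dsCinj K i).comm, Category.assoc,
      dsCinj_descX, (f i).comm]

lemma dsCinj_desc {ι : Type u} {K : ι → CC R} {L : CC R} (f : ∀ i, K i ⟶ L) (i : ι) :
    dsCinj K i ≫ dsCdesc f = f i := by
  ext1 n
  exact dsCinj_descX _ i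

lemma dsC_hom_ext {ι : Type u} {K : ι → CC R} {L : CC R} {f g : dsC K ⟶ L}
    (h : ∀ i, dsCinj K i ≫ f = dsCinj K i ≫ g) : f = g := by
  ext1 n
  apply dsC_hom_ext'
  intro i
  exact HomologicalComplex.congr_hom (h i) n

open Classical in
lemma dsCinj_map {ι : Type u} {K L : ι → CC R} (f : ∀ i, K i ⟶ L i) (i : ι) :
    dsCinj K i ≫ dsCmap f = f i ≫ dsCinj L i := by
  ext1 n
  apply ModuleCat.hom_ext
  apply LinearMap.ext
  intro x
  change DirectSum.lmap (fun i => ((f i).f n).hom)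
    (DirectSum.lof R ι (fun i => (K i).X n) i x) =
      DirectSum.lof R ι (fun i => (L i).X n) i ((f i).f n x)
  rw [DirectSum.lmap_lof]

lemma elemQI_dsCmap {ι : Type u} {K L : ι → CC R} (f : ∀ i, K i ⟶ L i) (hf : ∀ i, ElemQI (f i)) :
    ElemQI (dsCmap f) := by
  classical
  intro n
  constructor
  · rintro x hx ⟨y, hy⟩
    have : ∀ i (v : (K i).X n), ∃ w : (K i).X (n - 1), (v = 0 → w = 0) ∧
        ((∃ w', v = (K i).d (n - 1) n w') → v = (K i).d (n - 1) n w) := by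
      intro i v
      by_cases hv : v = 0
      · exact ⟨0, fun _ => rfl, fun _ => by rw [hv, map_zero]⟩
      · by_cases h : ∃ w', v = (K i).d (n - 1) n w'
        · exact ⟨h.choose, fun h' => absurd h' hv, fun _ => h.choose_spec⟩
        · exact ⟨0, fun _ => rfl, fun h' => absurd h' h⟩
    choose φ hφ0 hφ using this
    let w : (dsC K).X (n - 1) := DFinsupp.mapRange φ (fun i => hφ0 i 0 rfl)
      (show ⨁ i, (K i).X n from x)
    have hw : ∀ i, dsCcomp w i = φ i (dsCcomp x i) := fun i => rfl
    refine ⟨w, dsC_ext fun i => ?_⟩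
    change dsCcomp x i = dsCcomp _ i
    rw [dsCcomp_d, hw]
    apply hφ
    apply (hf i n).1
    · rw [← dsCcomp_d, hx, dsCcomp_zero]
    · exact ⟨dsCcomp y i, by rw [← dsCcomp_map, hy, dsCcomp_d]⟩
  · intro y hy
    have : ∀ i (v : (L i).X n), ∃ (x : (K i).X n) (w : (L i).X (n - 1)), (v = 0 → x = 0 ∧ w = 0) ∧
        ((L i).d n (n + 1) v = 0 →
          (K i).d n (n + 1) x = 0 ∧ v = (f i).f n x + (L i).d (n - 1) n w) := by
      intro i v
      by_cases hv : v = 0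
      · exact ⟨0, 0, fun _ => ⟨rfl, rfl⟩, fun _ => by simp [hv]⟩
      · by_cases h : (L i).d n (n + 1) v = 0
        · obtain ⟨x, w, hxw⟩ := (hf i n).2 v h
          exact ⟨x, w, fun h' => absurd h' hv, fun _ => hxw⟩
        · exact ⟨0, 0, fun _ => ⟨rfl, rfl⟩, fun h' => absurd h' h⟩
    choose φ ψ h0 h1 using this
    let x : (dsC K).X n := DFinsupp.mapRange φ (fun i => (h0 i 0 rfl).1)
      (show ⨁ i, (L i).X n from y)
    let w : (dsC L).X (n - 1) := DFinsupp.mapRange ψ (fun i => (h0 i 0 rfl).2)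
      (show ⨁ i, (L i).X n from y)
    have hx : ∀ i, dsCcomp x i = φ i (dsCcomp y i) := fun i => rfl
    have hw : ∀ i, dsCcomp w i = ψ i (dsCcomp y i) := fun i => rfl
    have hy' : ∀ i, (L i).d n (n + 1) (dsCcomp y i) = 0 := fun i => by
      rw [← dsCcomp_d, hy, dsCcomp_zero]
    refine ⟨x, w, dsC_ext fun i => ?_, dsC_ext fun i => ?_⟩
    · change dsCcomp _ i = dsCcomp _ i
      rw [dsCcomp_d, hx, dsCcomp_zero]
      exact (h1 i _ (hy' i)).1
    · change dsCcomp _ i = dsCcomp _ i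
      rw [dsCcomp_add, dsCcomp_map, dsCcomp_d, hx, hw]
      exact (h1 i _ (hy' i)).2

lemma quasiIso_dsCmap {ι : Type u} {K L : ι → CC R} (f : ∀ i, K i ⟶ L i)
    (hf : ∀ i, QuasiIso (f i)) : QuasiIso (dsCmap f) := by
  rw [quasiIso_iff_elemQI]
  exact elemQI_dsCmap f (fun i => (quasiIso_iff_elemQI _).1 (hf i))

/-- Sum of homotopies. -/
noncomputable def dsCHomotopy {ι : Type u} {K : ι → CC R} {L : CC R} (f : dsC K ⟶ L)
    (h : ∀ i, Homotopy (dsCinj K i ≫ f) 0) : Homotopy f 0 where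
  hom n m := dsCdescX (fun i => (h i).hom n m)
  zero n m hnm := by
    apply dsC_hom_ext'
    intro i
    rw [dsCinj_descX, (h i).zero n m hnm, comp_zero]
  comm n := by
    apply dsC_hom_ext'
    intro i
    have := (h i).comm n
    rw [dNext_eq _ (show (ComplexShape.up ℤ).Rel n (n + 1) by simp),
      prevD_eq _ (show (ComplexShape.up ℤ).Rel (n - 1) n by simp)] at this ⊢
    rw [HomologicalComplex.zero_f, add_zero] at this ⊢
    rw [HomologicalComplex.comp_f] at this
    rw [this, Preadditive.comp_add, ← Category.assoc, (dsCinj K i).comm, Category.assoc,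
      dsCinj_descX, ← Category.assoc, dsCinj_descX]

end ElemPart

section CoprodPart

open DerivedCategory

variable {R : Type u} [CommRing R] [HasDerivedCategory.{w'} (ModuleCat.{u} R)]

lemma Qh_map_quotient_eq_zero {K L : CC R} (f : K ⟶ L) (h : Q.map f = 0) :
    Qh.map ((HomotopyCategory.quotient _ _).map f) = 0 := by
  have := quotientCompQhIso_hom_naturality f
  rw [h, comp_zero] at this
  exact (cancel_mono_zero_iff_aux this)
where
  cancel_mono_zero_iff_aux {X Y Z : DerivedCategory (ModuleCat.{u} R)} {a : X ⟶ Y} {b : Y ⟶ Z} [IsIso b]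
    (h : a ≫ b = 0) : a = 0 := by
    rw [← cancel_mono b, h, zero_comp]

lemma exists_qi_homotopy {K L : CC R} (f : K ⟶ L) (h : Q.map f = 0) :
    ∃ (K' : CC R) (t : K' ⟶ K) (_ : QuasiIso t), Nonempty (Homotopy (t ≫ f) 0) := by
  have h' := Qh_map_quotient_eq_zero f h
  have h'' : Qh.map ((HomotopyCategory.quotient (ModuleCat.{u} R) (ComplexShape.up ℤ)).map f) =
      Qh.map 0 := by rw [h', Functor.map_zero]
  rw [MorphismProperty.map_eq_iff_precomp Qh (HomotopyCategory.quasiIso _ _)] at h''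
  obtain ⟨X, s, hs, e⟩ := h''
  obtain ⟨X, rfl⟩ := HomotopyCategory.quotient_obj_surjective X
  obtain ⟨s, rfl⟩ := (HomotopyCategory.quotient _ _).map_surjective s
  rw [HomotopyCategory.quotient_map_mem_quasiIso_iff] at hs
  refine ⟨X, s, hs, ⟨HomotopyCategory.homotopyOfEq _ _ ?_⟩⟩
  rw [Functor.map_comp, e, comp_zero, Functor.map_zero]

lemma coprod_uniq {ι : Type u} (K : ι → CC R) {Y : DerivedCategory (ModuleCat.{u} R)}
    (g : Q.obj (dsC K) ⟶ Y) (hg : ∀ i, Q.map (dsCinj K i) ≫ g = 0) : g = 0 := by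
  let L := Q.objPreimage Y
  let e : Q.obj L ≅ Y := Q.objObjPreimageIso Y
  obtain ⟨Y', h, s, hs, e1⟩ := left_fac (g ≫ e.inv)
  have hh : ∀ i, Q.map (dsCinj K i ≫ h) = 0 := by
    intro i
    have : Q.map h = (g ≫ e.inv) ≫ Q.map s := by rw [e1]; simp
    rw [Q.map_comp, this, ← Category.assoc, ← Category.assoc, hg]; simp
  choose K' t ht hH using fun i => exists_qi_homotopy _ (hh i)
  have hs : Homotopy (dsCmap t ≫ h) 0 := dsCHomotopy _ (fun i => by
    have := (hH i).some
    rwa [← Category.assoc, ← dsCinj_map, Category.assoc] at this)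
  have := quasiIso_dsCmap t ht
  have h0 := Q_map_eq_of_homotopy _ hs
  rw [Functor.map_comp, Functor.map_zero] at h0
  have h1 : Q.map h = 0 := by rw [← cancel_epi (Q.map (dsCmap t)), h0, comp_zero]
  rw [← cancel_mono e.inv, e1, h1, zero_comp, zero_comp]

lemma coprod_exists {ι : Type u} (K : ι → CC R) {Y : DerivedCategory (ModuleCat.{u} R)}
    (g : ∀ i, Q.obj (K i) ⟶ Y) : ∃ g' : Q.obj (dsC K) ⟶ Y, ∀ i, Q.map (dsCinj K i) ≫ g' = g i := by
  let L := Q.objPreimage Y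
  let e : Q.obj L ≅ Y := Q.objObjPreimageIso Y
  choose X' s hs h hh using fun i => right_fac (g i ≫ e.inv)
  have := quasiIso_dsCmap s (fun i => (isIso_Q_map_iff_quasiIso _ _).1 (hs i))
  refine ⟨inv (Q.map (dsCmap s)) ≫ Q.map (dsCdesc h) ≫ e.hom, fun i => ?_⟩
  have h1 : Q.map (s i) ≫ Q.map (dsCinj K i) ≫ inv (Q.map (dsCmap s)) = Q.map (dsCinj X' i) := by
    rw [← Category.assoc, ← Functor.map_comp, ← dsCinj_map, Functor.map_comp, Category.assoc,
      IsIso.hom_inv_id, Category.comp_id]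
  have h2 := hh i
  have h3 : g i = inv (Q.map (s i)) ≫ Q.map (h i) ≫ e.hom := by
    rw [← Category.assoc, ← h2, Category.assoc, e.inv_hom_id, Category.comp_id]
  rw [h3, ← cancel_epi (Q.map (s i)), IsIso.hom_inv_id_assoc, ← dsCinj_desc h, Functor.map_comp,
    ← h1]
  simp only [Category.assoc]

/-- The coproduct cofan. -/
noncomputable def dsCofan {ι : Type u} (K : ι → CC R) : Cofan (fun i => Q.obj (K i)) :=
  Cofan.mk (Q.obj (dsC K)) (fun i => Q.map (dsCinj K i))

lemma coprod_hom_ext {ι : Type u} (K : ι → CC R) {Y : DerivedCategory (ModuleCat.{u} R)}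
    (g g' : Q.obj (dsC K) ⟶ Y) (hg : ∀ i, Q.map (dsCinj K i) ≫ g = Q.map (dsCinj K i) ≫ g') :
    g = g' := by
  rw [← sub_eq_zero]
  apply coprod_uniq
  intro i
  rw [Preadditive.comp_sub, hg, sub_self]

/-- The coproduct cofan is a colimit. -/
noncomputable def dsCofanIsColimit {ι : Type u} (K : ι → CC R) : IsColimit (dsCofan K) :=
  Cofan.IsColimit.mk _ (fun s => (coprod_exists K (fun i => s.inj i)).choose)
    (fun s i => (coprod_exists K (fun i => s.inj i)).choose_spec i)
    (fun s m hm => coprod_hom_ext K _ _ (fun i => (hm i).trans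
      ((coprod_exists K (fun i => s.inj i)).choose_spec i).symm))

instance hasCoproducts_DR : HasCoproducts.{u} (DerivedCategory (ModuleCat.{u} R)) := by
  intro ι
  constructor
  intro F
  let K : ι → CC R := fun i => Q.objPreimage (F.obj ⟨i⟩)
  have : HasColimit (Discrete.functor (fun i => Q.obj (K i))) := ⟨⟨⟨_, dsCofanIsColimit K⟩⟩⟩
  exact hasColimit_of_iso (G := F) (F := Discrete.functor (fun i => Q.obj (K i)))
    (Discrete.natIso (fun i => (Q.objObjPreimageIso (F.obj i)).symm))

end CoprodPart

section TestPart

open DerivedCategory DirectSum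

lemma aux_conj {C : Type*} [Category C] {A B X Y : C} (α : A ≅ X) (β : B ≅ Y) {a : A ⟶ B}
    {g b : X ⟶ Y} (h1 : a = α.hom ≫ g ≫ β.inv) (h2 : a ≫ β.hom = α.hom ≫ b) : g = b := by
  subst h1
  simpa using h2

lemma aux_zero {C : Type*} [Category C] [Preadditive C] {W X Y : C} (e : X ≅ Y) (z : W ⟶ X)
    (h : z ≫ e.hom = 0) : z = 0 := by
  rw [← cancel_mono e.hom, h, zero_comp]

lemma aux_fac {C : Type*} [Category C] {W X Y : C} (e : X ≅ Y) (z : W ⟶ Y) (y : W ⟶ X)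
    (h : z ≫ e.inv = y) : y ≫ e.hom = z := by
  rw [← h, Category.assoc, e.inv_hom_id, Category.comp_id]

variable (R : Type u) [CommRing R]

/-- The complex `R[-m]`. -/
noncomputable abbrev sgR (m : ℤ) : CC R :=
  (HomologicalComplex.single (ModuleCat.{u} R) (ComplexShape.up ℤ) m).obj (ModuleCat.of R R)

instance projective_of_self : Projective (ModuleCat.of R R) :=
  (IsProjective.iff_projective (R := R) (P := R)).1 inferInstance

instance isKProjective_sgR (m : ℤ) : CochainComplex.IsKProjective (sgR R m) := by
  have : CochainComplex.IsStrictlyLE (sgR R m) m :=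
    inferInstanceAs (CochainComplex.IsStrictlyLE
      ((CochainComplex.singleFunctor (ModuleCat.{u} R) m).obj (ModuleCat.of R R)) m)
  exact CochainComplex.isKProjective_of_projective _ m

variable {R}

/-- The element attached to a chain map. -/
noncomputable def sgEl {m : ℤ} {L : CC R} (φ : sgR R m ⟶ L) : L.X m :=
  φ.f m ((HomologicalComplex.singleObjXSelf (ComplexShape.up ℤ) m (ModuleCat.of R R)).inv (1 : R))

lemma sgEl_ext {m : ℤ} {L : CC R} {φ ψ : sgR R m ⟶ L} (h : sgEl φ = sgEl ψ) : φ = ψ := by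
  apply HomologicalComplex.from_single_hom_ext
  rw [← cancel_epi (HomologicalComplex.singleObjXSelf (ComplexShape.up ℤ) m (ModuleCat.of R R)).inv]
  apply ModuleCat.hom_ext
  apply LinearMap.ext_ring
  exact h

lemma sgEl_comp {m : ℤ} {L L' : CC R} (φ : sgR R m ⟶ L) (g : L ⟶ L') :
    sgEl (φ ≫ g) = g.f m (sgEl φ) := rfl

lemma sgEl_d {m : ℤ} {L : CC R} (φ : sgR R m ⟶ L) : L.d m (m + 1) (sgEl φ) = 0 := by
  unfold sgEl
  rw [cc_comm]
  have : (sgR R m).d m (m + 1) = 0 := by simp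
  rw [this]
  simp

/-- The chain map attached to a cycle. -/
noncomputable def sgMap {m : ℤ} {L : CC R} (x : L.X m) (hx : L.d m (m + 1) x = 0) : sgR R m ⟶ L :=
  HomologicalComplex.mkHomFromSingle (ModuleCat.ofHom (LinearMap.toSpanSingleton R _ x)) (by
    intro k hk
    obtain rfl : m + 1 = k := hk
    ext
    simpa using hx)

lemma sgEl_sgMap {m : ℤ} {L : CC R} (x : L.X m) (hx : L.d m (m + 1) x = 0) :
    sgEl (sgMap x hx) = x := by
  unfold sgEl sgMap
  rw [HomologicalComplex.mkHomFromSingle_f, ← ConcreteCategory.comp_apply, Iso.inv_hom_id_assoc]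
  simp

lemma sgEl_sum {m : ℤ} {L : CC R} {ι : Type*} (F : Finset ι) (φ : ι → (sgR R m ⟶ L)) :
    sgEl (∑ i ∈ F, φ i) = ∑ i ∈ F, sgEl (φ i) := by
  classical
  induction F using Finset.induction_on with
  | empty => simp; rfl
  | insert a s ha ih => rw [Finset.sum_insert ha, Finset.sum_insert ha, ← ih]; rfl

variable [HasDerivedCategory.{w'} (ModuleCat.{u} R)]

lemma sgR_full {m : ℤ} {L : CC R} (g : Q.obj (sgR R m) ⟶ Q.obj L) :
    ∃ φ : sgR R m ⟶ L, g = Q.map φ := by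
  obtain ⟨φ, hφ⟩ := (CochainComplex.IsKProjective.Qh_map_bijective (sgR R m)
    ((HomotopyCategory.quotient _ _).obj L)).surjective
    ((quotientCompQhIso _).hom.app _ ≫ g ≫ (quotientCompQhIso _).inv.app _)
  obtain ⟨φ, rfl⟩ := (HomotopyCategory.quotient _ _).map_surjective φ
  refine ⟨φ, ?_⟩
  exact aux_conj ((quotientCompQhIso _).app (sgR R m)) ((quotientCompQhIso _).app L) hφ
    (quotientCompQhIso_hom_naturality φ)

lemma sgR_homotopy {m : ℤ} {L : CC R} (φ : sgR R m ⟶ L) (h : Q.map φ = 0) :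
    Nonempty (Homotopy φ 0) := by
  have h' := Qh_map_quotient_eq_zero φ h
  have h2 : (HomotopyCategory.quotient (ModuleCat.{u} R) (ComplexShape.up ℤ)).map φ = 0 := by
    apply (CochainComplex.IsKProjective.Qh_map_bijective (sgR R m)
      ((HomotopyCategory.quotient _ _).obj L)).injective
    rw [h', Functor.map_zero]
  exact ⟨HomotopyCategory.homotopyOfEq _ _ (by rw [h2, Functor.map_zero])⟩

lemma sgEl_boundary {m : ℤ} {L : CC R} (φ : sgR R m ⟶ L) (h : Q.map φ = 0) :
    ∃ w : L.X (m - 1), sgEl φ = L.d (m - 1) m w := by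
  obtain ⟨H⟩ := sgR_homotopy φ h
  have := H.comm m
  rw [dNext_eq _ (show (ComplexShape.up ℤ).Rel m (m + 1) by simp),
      prevD_eq _ (show (ComplexShape.up ℤ).Rel (m - 1) m by simp)] at this
  have h0 : (sgR R m).d m (m + 1) = 0 := by simp
  rw [h0, zero_comp, zero_add, HomologicalComplex.zero_f, add_zero] at this
  unfold sgEl
  rw [this, ConcreteCategory.comp_apply]
  exact ⟨_, rfl⟩

variable (R) in
/-- The test objects. -/
noncomputable def PP (m : ℤ) : DerivedCategory (ModuleCat.{u} R) := Q.obj (sgR R m)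

lemma PP_zero (X : DerivedCategory (ModuleCat.{u} R)) (h : ∀ m (g : PP R m ⟶ X), g = 0) :
    IsZero X := by
  let L := Q.objPreimage X
  let e : Q.obj L ≅ X := Q.objObjPreimageIso X
  have : QuasiIso (0 : (0 : CC R) ⟶ L) := by
    rw [quasiIso_iff_elemQI]
    intro n
    have hs : ∀ k : ℤ, Subsingleton ((0 : CC R).X k) := fun k => by
      have : IsZero ((0 : CC R).X k) :=
        (HomologicalComplex.eval _ _ k).map_isZero (isZero_zero _)
      exact ModuleCat.subsingleton_of_isZero this
    constructor
    · intro x _ _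
      exact ⟨0, Subsingleton.elim _ _⟩
    · intro y hy
      have h1 : Q.map (sgMap y hy) ≫ e.hom = 0 := h n _
      have h2 : Q.map (sgMap y hy) = 0 := by
        rw [← cancel_mono e.hom, h1, zero_comp]
      obtain ⟨w, hw⟩ := sgEl_boundary _ h2
      rw [sgEl_sgMap] at hw
      exact ⟨0, w, by simp, by simpa using hw⟩
  have h1 : IsIso (Q.map (0 : (0 : CC R) ⟶ L)) := inferInstance
  have h2 : IsZero (Q.obj (0 : CC R)) := Q.map_isZero (isZero_zero _)
  exact h2.of_iso ((asIso (Q.map (0 : (0 : CC R) ⟶ L))) ≪≫ e).symm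

lemma PP_small {ι : Type u} (X : ι → DerivedCategory (ModuleCat.{u} R)) (c : Cofan X)
    (hc : IsColimit c) (m : ℤ) (g : Q.obj (sgR R m) ⟶ c.pt) :
    ∃ (F : Finset ι) (y : ∀ i, Q.obj (sgR R m) ⟶ X i), g = ∑ i ∈ F, y i ≫ c.inj i := by
  classical
  let K : ι → CC R := fun i => Q.objPreimage (X i)
  let e : ∀ i, Q.obj (K i) ≅ X i := fun i => Q.objObjPreimageIso (X i)
  let θ : c.pt ⟶ Q.obj (dsC K) := Cofan.IsColimit.desc hc (fun i => (e i).inv ≫ Q.map (dsCinj K i))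
  have hθ : ∀ i, c.inj i ≫ θ = (e i).inv ≫ Q.map (dsCinj K i) := fun i =>
    Cofan.IsColimit.fac hc _ _
  obtain ⟨η, hη⟩ := coprod_exists K (fun i => (e i).hom ≫ c.inj i)
  have hθη : θ ≫ η = 𝟙 _ := by
    apply Cofan.IsColimit.hom_ext hc
    intro i
    rw [← Category.assoc, hθ, Category.assoc, hη, Iso.inv_hom_id_assoc, Category.comp_id]
  obtain ⟨φ, hφ⟩ := sgR_full (g ≫ θ)
  let x : ⨁ i, (K i).X m := sgEl φ
  have hx : ∀ i, (K i).d m (m + 1) (x i) = 0 := by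
    intro i
    have := sgEl_d φ
    change dsCcomp ((dsC K).d m (m + 1) (sgEl φ)) i = 0
    rw [this]; rfl
  have key : φ = ∑ i ∈ DFinsupp.support x, sgMap (x i) (hx i) ≫ dsCinj K i := by
    apply sgEl_ext
    rw [sgEl_sum]
    change x = _
    refine (DirectSum.sum_support_of x).symm.trans ?_
    apply Finset.sum_congr rfl
    intro i _
    rw [sgEl_comp, sgEl_sgMap]
    change _ = DirectSum.lof R ι (fun i => (K i).X m) i (x i)
    rw [DirectSum.lof_eq_of]
  refine ⟨DFinsupp.support x, fun i => Q.map (sgMap (x i) (hx i)) ≫ (e i).hom, ?_⟩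
  have : g = Q.map φ ≫ η := by rw [← hφ, Category.assoc, hθη, Category.comp_id]
  rw [this, key, Functor.map_sum, Preadditive.sum_comp]
  apply Finset.sum_congr rfl
  intro i _
  rw [Functor.map_comp, Category.assoc, hη]
  exact (Category.assoc _ _ _).symm

lemma PP_sm (m : ℤ) (X : DerivedCategory (ModuleCat.{u} R)) : Small.{u} (PP R m ⟶ X) := by
  let L := Q.objPreimage X
  let e : Q.obj L ≅ X := Q.objObjPreimageIso X
  have : Small.{u} (sgR R m ⟶ L) :=
    small_of_injective (f := fun φ : sgR R m ⟶ L => sgEl φ) (fun _ _ h => sgEl_ext h)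
  apply small_of_surjective (f := fun φ : sgR R m ⟶ L => (Q.map φ ≫ e.hom : PP R m ⟶ X))
  intro g
  obtain ⟨φ, hφ⟩ := sgR_full (g ≫ e.inv)
  exact ⟨φ, aux_fac e g _ hφ⟩

variable (R) in
/-- Shift isomorphism. -/
noncomputable def sShift (M : ModuleCat.{u} R) (n a a' : ℤ) (h : n + a = a') :
    ((singleFunctor (ModuleCat.{u} R) a').obj M)⟦n⟧ ≅ (singleFunctor (ModuleCat.{u} R) a).obj M :=
  ((singleFunctors (ModuleCat.{u} R)).shiftIso n a a' h).app M

variable (R) in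
lemma isTestFamily_PP : IsTestFamily.{u} (PP R) where
  zero := PP_zero
  small := PP_small
  sm := PP_sm
  shift m := ⟨(sShift R (ModuleCat.of R R) 1 m (m + 1) (add_comm _ _)).symm⟩

lemma PP_smod_zero (M : ModuleCat.{u} R) (n m : ℤ) (h : n + m ≠ 0) (z : PP R m ⟶ (smod R M)⟦n⟧) :
    z = 0 := by
  let e := sShift R M n (-n) 0 (by simp)
  obtain ⟨φ, hφ⟩ := sgR_full (L := (HomologicalComplex.single (ModuleCat.{u} R) (ComplexShape.up ℤ) (-n)).obj M) (z ≫ e.hom)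
  have : φ = 0 := by
    apply sgEl_ext
    have hz : IsZero (((HomologicalComplex.single (ModuleCat.{u} R) (ComplexShape.up ℤ) (-n)).obj M).X m) :=
      HomologicalComplex.isZero_single_obj_X _ _ _ _ (by omega)
    have := ModuleCat.subsingleton_of_isZero hz
    exact Subsingleton.elim _ _
  rw [this, Functor.map_zero] at hφ
  exact aux_zero e z hφ

end TestPart

section UnivShift

universe u₁

variable {T : Type w} [Category.{v} T] [Preadditive T] [HasZeroObject T]
  [HasShift T ℤ] [∀ n : ℤ, (shiftFunctor T n).Additive] [Pretriangulated T]
  {R : Type u} [CommRing R] [Linear R T] [∀ n : ℤ, (shiftFunctor T n).Linear R]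

lemma IsUnivInv.shift {f : R} {X E : T} {ρ : X ⟶ E} (h : IsUnivInv f ρ) (n : ℤ) :
    IsUnivInv f (ρ⟦n⟧') := by
  intro Y hY
  have hY' := (isLocalizingSub_invSet.{0} f).shift_mem (-n) hY
  let adj := (shiftEquiv T n).toAdjunction
  constructor
  · intro k
    obtain ⟨k', hk'⟩ := (h _ hY').1 (adj.homEquiv _ _ k)
    refine ⟨(adj.homEquiv _ _).symm k', ?_⟩
    have := adj.homEquiv_naturality_left_symm ρ k'
    refine this.symm.trans ((congrArg (adj.homEquiv X Y).symm hk').trans ?_)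
    exact Equiv.symm_apply_apply _ _
  · intro k hk
    have h1 := adj.homEquiv_naturality_left ρ k
    have h2 : (shiftEquiv T n).functor.map ρ ≫ k = 0 := hk
    rw [h2] at h1
    have h0 : ∀ Z : T, adj.homEquiv Z Y 0 = 0 := fun Z => by
      rw [Adjunction.homEquiv_unit]
      have : (shiftEquiv T n).inverse.map (0 : (shiftEquiv T n).functor.obj Z ⟶ Y) = 0 :=
        (shiftFunctor T (-n)).map_zero _ _
      rw [this, comp_zero]
    rw [h0] at h1
    have h3 := (h _ hY').2 _ h1.symm
    apply (adj.homEquiv _ _).injective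
    rw [h3]
    exact (h0 _).symm

lemma IsUnivInv.iso_comp {f : R} {X X' E : T} {ρ : X ⟶ E} (h : IsUnivInv f ρ) (e : X' ≅ X) :
    IsUnivInv f (e.hom ≫ ρ) := by
  intro Y hY
  constructor
  · intro k
    obtain ⟨k', hk'⟩ := (h _ hY).1 (e.inv ≫ k)
    exact ⟨k', by rw [Category.assoc, hk', Iso.hom_inv_id_assoc]⟩
  · intro k hk
    apply (h _ hY).2
    rw [← cancel_epi e.hom, ← Category.assoc, hk, comp_zero]

lemma IsUnivInv.comp_iso {f : R} {X E E' : T} {ρ : X ⟶ E} (h : IsUnivInv f ρ) (e : E ⟶ E') [IsIso e] :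
    IsUnivInv f (ρ ≫ e) := by
  intro Y hY
  constructor
  · intro k
    obtain ⟨k', hk'⟩ := (h _ hY).1 k
    exact ⟨inv e ≫ k', by rw [Category.assoc, IsIso.hom_inv_id_assoc, hk']⟩
  · intro k hk
    rw [Category.assoc] at hk
    have := (h _ hY).2 _ hk
    rw [← cancel_epi e, this, comp_zero]

lemma Tel.smul_pow_j {X : T} {f : R} (H : Tel.{u₁} (fun _ => X) (fun _ => f • 𝟙 X)) (n k : ℕ) :
    f ^ k • H.j (n + k) = H.j n := by
  induction k with
  | zero => simp
  | succ k ih =>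
    have := H.s_j (n + k)
    rw [Linear.smul_comp, Category.id_comp] at this
    rw [← add_assoc, pow_succ, mul_smul, this, ih]

end UnivShift

section LocPart

open DerivedCategory

variable {R : Type u} [CommRing R] [HasDerivedCategory.{w'} (ModuleCat.{u} R)]

lemma PP_smod_zero' (M : ModuleCat.{u} R) (m : ℤ) (h : m ≠ 0) (z : PP R m ⟶ smod R M) :
    z = 0 := by
  have := PP_smod_zero M 0 m (by simpa using h)
    (z ≫ (shiftFunctorZero (DerivedCategory (ModuleCat.{u} R)) ℤ).inv.app (smod R M))
  exact aux_zero (((shiftFunctorZero (DerivedCategory (ModuleCat.{u} R)) ℤ).symm.app (smod R M))) z this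

/-- The maps on `smod`. -/
noncomputable def smap {M N : ModuleCat.{u} R} (φ : M ⟶ N) : smod R M ⟶ smod R N :=
  (singleFunctor (ModuleCat.{u} R) 0).map φ

lemma smap_full {M N : ModuleCat.{u} R} (g : smod R M ⟶ smod R N) : ∃ φ : M ⟶ N, smap φ = g :=
  (singleFunctor (ModuleCat.{u} R) 0).map_surjective g

lemma smap_comp {M N K : ModuleCat.{u} R} (φ : M ⟶ N) (ψ : N ⟶ K) :
    smap (φ ≫ ψ) = smap φ ≫ smap ψ := Functor.map_comp _ _ _

lemma smap_id (M : ModuleCat.{u} R) : smap (𝟙 M) = 𝟙 (smod R M) :=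
  CategoryTheory.Functor.map_id _ _

lemma smap_smul {M N : ModuleCat.{u} R} (r : R) (φ : M ⟶ N) :
    smap (r • φ) = r • smap φ := Functor.map_smul _ _ _

lemma smap_zero (M N : ModuleCat.{u} R) : smap (0 : M ⟶ N) = 0 := Functor.map_zero _ _ _

lemma smap_inj {M N : ModuleCat.{u} R} {φ ψ : M ⟶ N} (h : smap φ = smap ψ) : φ = ψ :=
  (singleFunctor (ModuleCat.{u} R) 0).map_injective h

/-- The map from `R` given by an element. -/
noncomputable def elMap (M : ModuleCat.{u} R) (x : M) : ModuleCat.of R R ⟶ M :=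
  ModuleCat.ofHom (LinearMap.toSpanSingleton R M x)

lemma elMap_surj {M : ModuleCat.{u} R} (φ : ModuleCat.of R R ⟶ M) : φ = elMap M (φ (1 : R)) := by
  ext
  simp [elMap]

lemma elMap_smul {M : ModuleCat.{u} R} (r : R) (x : M) : elMap M (r • x) = r • elMap M x := by
  ext
  simp [elMap]

lemma elMap_zero {M : ModuleCat.{u} R} : elMap M 0 = 0 := by
  ext
  simp [elMap]

lemma elMap_inj {M : ModuleCat.{u} R} {x y : M} (h : elMap M x = elMap M y) : x = y := by
  have := congrArg (fun φ => φ (1 : R)) h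
  simpa [elMap] using this

lemma elMap_comp {M : ModuleCat.{u} R} (r : R) (x : M) :
    elMap (ModuleCat.of R R) r ≫ elMap M x = elMap M (r • x) := by
  ext
  simp [elMap]

lemma loc_main (f : R) :
    IsUnivInv f (smap (elMap (ModuleCat.of R (Localization.Away f)) 1)) ∧
      smod R (ModuleCat.of R (Localization.Away f)) ∈ invSet (DerivedCategory (ModuleCat.{u} R)) f := by
  let M := ModuleCat.of R (Localization.Away f)
  let v : Localization.Away f := IsLocalization.Away.invSelf f
  have hv : f • v = 1 := by
    rw [Algebra.smul_def]
    exact IsLocalization.Away.mul_invSelf f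
  have hvn : ∀ n : ℕ, f • v ^ (n + 1) = v ^ n := fun n => by
    rw [pow_succ, mul_comm, ← smul_mul_assoc, hv, one_mul]
  have hvn' : ∀ n : ℕ, f ^ n • v ^ n = 1 := fun n => by
    rw [← smul_pow, hv, one_pow]
  obtain ⟨H⟩ := Tel.exists.{u} (fun _ => smod R (ModuleCat.of R R))
    (fun _ => f • 𝟙 (smod R (ModuleCat.of R R)))
  obtain ⟨π, hπ⟩ := H.extend (fun n => smap (elMap M (v ^ n))) (fun n => by
    rw [Linear.smul_comp, Category.id_comp, ← smap_smul, ← elMap_smul]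
    congr 2
    exact hvn n)
  have key1 : ∀ (N : ℕ) (y : smod R (ModuleCat.of R R) ⟶ smod R (ModuleCat.of R R)),
      (y ≫ H.j N) ≫ π = 0 → y ≫ H.j N = 0 := by
    intro N y hx
    obtain ⟨φ, hφ⟩ := smap_full y
    rw [Category.assoc, hπ] at hx
    rw [elMap_surj φ] at hφ
    generalize hr : φ (1 : R) = r at hφ
    change R at r
    rw [← hφ, ← smap_comp, elMap_comp] at hx
    have h1 : r • v ^ N = 0 :=
      elMap_inj (M := M) ((smap_inj (hx.trans (smap_zero _ _).symm)).trans elMap_zero.symm)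
    have h2 : algebraMap R (Localization.Away f) r = 0 := by
      rw [Algebra.algebraMap_eq_smul_one, ← hvn' N, smul_comm, h1, smul_zero]
    rw [IsLocalization.map_eq_zero_iff (Submonoid.powers f)] at h2
    obtain ⟨⟨_, k, rfl⟩, hk⟩ := h2
    rw [← H.smul_pow_j N k, Linear.comp_smul, ← Linear.smul_comp, ← hφ, ← smap_smul,
      ← elMap_smul]
    have : f ^ k • r = 0 := hk
    rw [this, elMap_zero, smap_zero, zero_comp]
  have key2 : ∀ (y : smod R (ModuleCat.of R R) ⟶ smod R M),
      ∃ x : smod R (ModuleCat.of R R) ⟶ H.H, x ≫ π = y := by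
    intro y
    obtain ⟨φ, hφ⟩ := smap_full y
    rw [elMap_surj φ] at hφ
    generalize hr : φ (1 : R) = z at hφ
    obtain ⟨n, a, ha⟩ := IsLocalization.Away.surj f (show Localization.Away f from z)
    refine ⟨smap (elMap _ a) ≫ H.j n, ?_⟩
    rw [Category.assoc, hπ, ← hφ, ← smap_comp, elMap_comp]
    congr 2
    have hh : a • v ^ n = (show Localization.Away f from z) := by
      rw [Algebra.smul_def, ← ha, mul_assoc, ← map_pow, ← Algebra.smul_def, hvn', mul_one]
    exact hh
  have hiso : IsIso π := by
    apply (isTestFamily_PP R).isIso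
    · intro m x hx
      obtain ⟨N, y, rfl⟩ := H.factor (isTestFamily_PP R) m x
      by_cases hm : m = 0
      · subst hm
        exact key1 N y hx
      · rw [PP_smod_zero' _ m hm y, zero_comp]
    · intro m y
      by_cases hm : m = 0
      · subst hm
        exact key2 y
      · exact ⟨0, by rw [zero_comp, PP_smod_zero' _ m hm y]⟩
  constructor
  · have := H.isUnivInv.comp_iso π
    rw [hπ, pow_zero] at this
    exact this
  · exact (isLocalizingSub_invSet.{u} f).mem_of_iso (asIso π) H.mem_invSet

lemma invSet_subset_loc (f : R) {L : Set (DerivedCategory (ModuleCat.{u} R))}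
    (hL : IsLocalizingSub.{u} L) (h : smod R (ModuleCat.of R (Localization.Away f)) ∈ L) :
    invSet (DerivedCategory (ModuleCat.{u} R)) f ⊆ L := by
  obtain ⟨h1, h2⟩ := loc_main f
  exact invSet_subset_of_univInv (isTestFamily_PP R)
    (fun m => (sShift R (ModuleCat.of R R) (-m) m 0 (by simp)).inv ≫
      (smap (elMap (ModuleCat.of R (Localization.Away f)) 1))⟦-m⟧')
    (fun m => (h1.shift (-m)).iso_comp (sShift R (ModuleCat.of R R) (-m) m 0 (by simp)).symm)
    (fun m => (isLocalizingSub_invSet.{u} f).shift_mem _ h2) hL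
    (fun m => hL.shift_mem _ h)

end LocPart

section ShiftPre

universe u₁ v₁

variable {T : Type u₁} [Category.{v₁} T] [Preadditive T]
  [HasShift T ℤ] [∀ n : ℤ, (shiftFunctor T n).Additive]

lemma shift_pre_surj {X Y : T} (δ : X ⟶ Y) (n : ℤ) {B : T}
    (H : ∀ k : X ⟶ B⟦-n⟧, ∃ k' : Y ⟶ B⟦-n⟧, δ ≫ k' = k) (h : X⟦n⟧ ⟶ B) :
    ∃ h' : Y⟦n⟧ ⟶ B, δ⟦n⟧' ≫ h' = h := by
  let adj := (shiftEquiv T n).toAdjunction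
  obtain ⟨k', hk'⟩ := H (adj.homEquiv _ _ h)
  refine ⟨(adj.homEquiv _ _).symm k', ?_⟩
  have := adj.homEquiv_naturality_left_symm δ k'
  refine this.symm.trans ((congrArg (adj.homEquiv X B).symm hk').trans ?_)
  exact Equiv.symm_apply_apply _ _

lemma shift_pre_inj {X Y : T} (δ : X ⟶ Y) (n : ℤ) {B : T}
    (H : ∀ k : Y ⟶ B⟦-n⟧, δ ≫ k = 0 → k = 0) (k : Y⟦n⟧ ⟶ B) (hk : δ⟦n⟧' ≫ k = 0) :
    k = 0 := by
  let adj := (shiftEquiv T n).toAdjunction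
  have h1 := adj.homEquiv_naturality_left δ k
  have h2 : (shiftEquiv T n).functor.map δ ≫ k = 0 := hk
  rw [h2] at h1
  have h0 : ∀ Z : T, adj.homEquiv Z B 0 = 0 := fun Z => by
    rw [Adjunction.homEquiv_unit]
    have : (shiftEquiv T n).inverse.map (0 : (shiftEquiv T n).functor.obj Z ⟶ B) = 0 :=
      (shiftFunctor T (-n)).map_zero _ _
    rw [this, comp_zero]
  rw [h0] at h1
  have h3 := H _ h1.symm
  apply (adj.homEquiv _ _).injective
  rw [h3]
  exact (h0 _).symm

end ShiftPre

section ModPart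

open DerivedCategory DirectSum

variable {R : Type u} [CommRing R] [HasDerivedCategory.{w'} (ModuleCat.{u} R)]

lemma ses_triangle {A M N : ModuleCat.{u} R} (i : A ⟶ M) (p : M ⟶ N)
    (hi : Function.Injective i) (hp : Function.Surjective p)
    (hex : Function.Exact i p) :
    ∃ δ : smod R N ⟶ (smod R A)⟦(1 : ℤ)⟧, Triangle.mk (smap i) (smap p) δ ∈
      distTriang (DerivedCategory (ModuleCat.{u} R)) := by
  have w : i ≫ p = 0 := by
    apply ModuleCat.hom_ext
    apply LinearMap.ext
    intro x
    exact (hex _).2 ⟨x, rfl⟩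
  have hS : (ShortComplex.mk i p w).ShortExact :=
    ModuleCat.shortComplex_shortExact _ hex hi hp
  exact ⟨_, hS.singleTriangle_distinguished⟩

/-- The inclusion in a direct sum of modules. -/
noncomputable def dsI {ι : Type u} (M : ι → ModuleCat.{u} R) (i : ι) :
    M i ⟶ ModuleCat.of R (⨁ i, M i) :=
  letI := Classical.decEq ι
  ModuleCat.ofHom (DirectSum.lof R ι (fun i => M i) i)

lemma dsI_ext {ι : Type u} (M : ι → ModuleCat.{u} R) {N : ModuleCat.{u} R}
    {f g : ModuleCat.of R (⨁ i, M i) ⟶ N} (h : ∀ i, dsI M i ≫ f = dsI M i ≫ g) : f = g := by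
  letI := Classical.decEq ι
  apply ModuleCat.hom_ext
  apply DirectSum.linearMap_ext
  intro i
  exact congrArg ModuleCat.Hom.hom (h i)

lemma dsI_desc {ι : Type u} (M : ι → ModuleCat.{u} R) {N : ModuleCat.{u} R}
    (f : ∀ i, M i ⟶ N) : ∃ g : ModuleCat.of R (⨁ i, M i) ⟶ N, ∀ i, dsI M i ≫ g = f i := by
  letI := Classical.decEq ι
  refine ⟨ModuleCat.ofHom (DirectSum.toModule R ι N (fun i => (f i).hom)), fun i => ?_⟩
  apply ModuleCat.hom_ext
  apply LinearMap.ext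
  intro x
  exact DirectSum.toModule_lof (R := R) (M := fun i => M i) (φ := fun i => (f i).hom) i x

/-- The single complex functor. -/
noncomputable abbrev sg0 (R : Type u) [CommRing R] : ModuleCat.{u} R ⥤ CC R :=
  HomologicalComplex.single (ModuleCat.{u} R) (ComplexShape.up ℤ) 0

lemma dsI_iso {ι : Type u} (M : ι → ModuleCat.{u} R) :
    Nonempty (dsC (fun i => (sg0 R).obj (M i)) ≅ (sg0 R).obj (ModuleCat.of R (⨁ i, M i))) := by
  let K := fun i => (sg0 R).obj (M i)
  let a : dsC K ⟶ (sg0 R).obj (ModuleCat.of R (⨁ i, M i)) :=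
    dsCdesc (fun i => (sg0 R).map (dsI M i))
  have ha : ∀ i, dsCinj K i ≫ a = (sg0 R).map (dsI M i) := fun i => dsCinj_desc _ i
  obtain ⟨g, hg⟩ := dsI_desc M (N := (dsC K).X 0)
    (fun i => (HomologicalComplex.singleObjXSelf (ComplexShape.up ℤ) 0 (M i)).inv ≫ (dsCinj K i).f 0)
  have hd : ∀ k, (ComplexShape.up ℤ).Rel 0 k → g ≫ (dsC K).d 0 k = 0 := by
    intro k _
    apply dsI_ext
    intro i
    rw [comp_zero, ← Category.assoc, hg, Category.assoc, (dsCinj K i).comm]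
    have : (K i).d 0 k = 0 := HomologicalComplex.single_obj_d _ _ _ _ _
    rw [this]
    simp
  let b : (sg0 R).obj (ModuleCat.of R (⨁ i, M i)) ⟶ dsC K :=
    HomologicalComplex.mkHomFromSingle g hd
  have hb : ∀ i, (sg0 R).map (dsI M i) ≫ b = dsCinj K i := by
    intro i
    apply HomologicalComplex.from_single_hom_ext
    rw [HomologicalComplex.comp_f, HomologicalComplex.mkHomFromSingle_f,
      HomologicalComplex.single_map_f_self, Category.assoc, Category.assoc,
      Iso.inv_hom_id_assoc, hg, Iso.hom_inv_id_assoc]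
  refine ⟨⟨a, b, ?_, ?_⟩⟩
  · apply dsC_hom_ext
    intro i
    rw [← Category.assoc, ha, hb, Category.comp_id]
  · have : ∀ (N : ModuleCat.{u} R) (φ ψ : (sg0 R).obj (ModuleCat.of R (⨁ i, M i)) ⟶ (sg0 R).obj N),
      (∀ i, (sg0 R).map (dsI M i) ≫ φ = (sg0 R).map (dsI M i) ≫ ψ) → φ = ψ := by
      intro N φ ψ h
      obtain ⟨φ, rfl⟩ := (sg0 R).map_surjective φ
      obtain ⟨ψ, rfl⟩ := (sg0 R).map_surjective ψ
      congr 1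
      apply dsI_ext
      intro i
      apply (sg0 R).map_injective
      rw [Functor.map_comp, Functor.map_comp, h]
    apply this
    intro i
    rw [← Category.assoc, hb, ha, Category.comp_id]

lemma smod_ds_mem {ι : Type u} (M : ι → ModuleCat.{u} R)
    {L : Set (DerivedCategory (ModuleCat.{u} R))} (hL : IsLocalizingSub.{u} L)
    (h : ∀ i, smod R (M i) ∈ L) : smod R (ModuleCat.of R (⨁ i, M i)) ∈ L := by
  obtain ⟨e⟩ := dsI_iso M
  have h1 := hL.coprod_mem _ _ (dsCofanIsColimit (fun i => (sg0 R).obj (M i)))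
    (fun i => hL.mem_of_iso ((SingleFunctors.evaluation _ _ 0).mapIso
      (singleFunctorsPostcompQIso (ModuleCat.{u} R)) |>.app (M i)) (h i))
  exact hL.mem_of_iso ((Q.mapIso e).trans (((SingleFunctors.evaluation _ _ 0).mapIso
      (singleFunctorsPostcompQIso (ModuleCat.{u} R)) |>.app _).symm)) h1

end ModPart

section StepA

open DerivedCategory DirectSum

variable {R : Type u} [CommRing R] [HasDerivedCategory.{w'} (ModuleCat.{u} R)]

/-- The module is annihilated by the ideal. -/
def Killed (I : Ideal R) (M : ModuleCat.{u} R) : Prop := ∀ a ∈ I, ∀ x : M, a • x = 0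

/-- The right orthogonal of the quotient ring. -/
def VV (I : Ideal R) : Set (DerivedCategory (ModuleCat.{u} R)) :=
  rightOrth (Loc.{u} {smod R (ModuleCat.of R (R ⧸ I))})

lemma VV_shift (I : Ideal R) (n : ℤ) {x : DerivedCategory (ModuleCat.{u} R)} (hx : x ∈ VV I) :
    x⟦n⟧ ∈ VV I := rightOrth_shift (fun n _ h => Loc_shift _ n h) n hx

lemma killed_cover (I : Ideal R) (M : ModuleCat.{u} R) (hM : Killed I M) :
    ∃ (Ω : ModuleCat.{u} R), Killed I Ω ∧ ∃ δ : smod R M ⟶ (smod R Ω)⟦(1 : ℤ)⟧,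
      ∀ B ∈ VV I, ∀ k : smod R M ⟶ B, ∃ k' : (smod R Ω)⟦(1 : ℤ)⟧ ⟶ B, δ ≫ k' = k := by
  let Q : M → ModuleCat.{u} R := fun _ => ModuleCat.of R (R ⧸ I)
  let q : ∀ m, Q m ⟶ M := fun m => ModuleCat.ofHom
    (Submodule.liftQ I (LinearMap.toSpanSingleton R M m) (fun a ha => by
      change a • m = 0
      exact hM a ha m))
  obtain ⟨p, hp⟩ := dsI_desc Q q
  let i : ModuleCat.of R (LinearMap.ker p.hom) ⟶ ModuleCat.of R (⨁ m, Q m) :=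
    ModuleCat.ofHom (LinearMap.ker p.hom).subtype
  have hsurj : Function.Surjective p := by
    intro m
    refine ⟨dsI Q m (Submodule.Quotient.mk (1 : R)), ?_⟩
    rw [← ConcreteCategory.comp_apply, hp]
    change Submodule.liftQ I (LinearMap.toSpanSingleton R M m) _ (Submodule.Quotient.mk (1 : R)) = m
    rw [Submodule.liftQ_apply]
    simp
  obtain ⟨δ, hδ⟩ := ses_triangle i p (LinearMap.ker p.hom).injective_subtype hsurj
    (fun y => ⟨fun h => ⟨⟨y, h⟩, rfl⟩, by rintro ⟨x, rfl⟩; exact x.2⟩)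
  refine ⟨_, ?_, δ, ?_⟩
  · intro a ha x
    apply Subtype.ext
    change a • (x.1 : ⨁ m, Q m) = 0
    refine DFinsupp.ext fun m => ?_
    change a • (x.1 m) = 0
    obtain ⟨r, hr⟩ := Submodule.Quotient.mk_surjective I (x.1 m)
    rw [← hr]
    rw [← Submodule.Quotient.mk_smul]
    exact (Submodule.Quotient.mk_eq_zero I).2 (I.mul_mem_right _ ha)
  · intro B hB k
    have hF : smod R (ModuleCat.of R (⨁ m, Q m)) ∈ Loc.{u} {smod R (ModuleCat.of R (R ⧸ I))} :=
      smod_ds_mem Q (isLocalizingSub_Loc _) (fun m => subset_Loc _ rfl)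
    obtain ⟨k', hk'⟩ := dt_y₃ hδ k (hB hF _)
    exact ⟨k', hk'.symm⟩

lemma killed_hom_zero (I : Ideal R) (M : ModuleCat.{u} R) (hM : Killed I M)
    (B : DerivedCategory (ModuleCat.{u} R)) (hB : B ∈ VV I) (g : smod R M ⟶ B) : g = 0 := by
  choose Ω hΩ δ hδ using fun M : {M : ModuleCat.{u} R // Killed I M} => killed_cover I M.1 M.2
  let K : ℕ → {M : ModuleCat.{u} R // Killed I M} :=
    fun n => Nat.rec ⟨M, hM⟩ (fun _ X => ⟨Ω X, hΩ X⟩) n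
  let A : ℕ → DerivedCategory (ModuleCat.{u} R) := fun n => (smod R (K n).1)⟦(n : ℤ)⟧
  let e : ∀ n : ℕ, ((smod R (K (n + 1)).1)⟦(1 : ℤ)⟧)⟦(n : ℤ)⟧ ≅ A (n + 1) := fun n =>
    ((shiftFunctorAdd' (DerivedCategory (ModuleCat.{u} R)) (1 : ℤ) (n : ℤ) ((n + 1 : ℕ) : ℤ)
      (by push_cast; ring)).app (smod R (K (n + 1)).1)).symm
  let s : ∀ n, A n ⟶ A (n + 1) := fun n => (δ (K n))⟦(n : ℤ)⟧' ≫ (e n).hom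
  have hs : ∀ n (h : A n ⟶ B), ∃ h' : A (n + 1) ⟶ B, s n ≫ h' = h := by
    intro n h
    obtain ⟨h', hh'⟩ := shift_pre_surj (δ (K n)) (n : ℤ) (B := B)
      (hδ (K n) _ (VV_shift I _ hB)) h
    refine ⟨(e n).inv ≫ h', ?_⟩
    change ((δ (K n))⟦(n : ℤ)⟧' ≫ (e n).hom) ≫ (e n).inv ≫ h' = h
    rw [Category.assoc, Iso.hom_inv_id_assoc, hh']
  choose nx hnx using hs
  let e0 : A 0 ≅ smod R M := (shiftFunctorZero (DerivedCategory (ModuleCat.{u} R)) ℤ).app (smod R M)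
  let hh : ∀ n, A n ⟶ B := fun n => Nat.rec (motive := fun n => A n ⟶ B) (e0.hom ≫ g)
    (fun n h => nx n h) n
  obtain ⟨H⟩ := Tel.exists.{u} A s
  obtain ⟨h', hh'⟩ := H.extend hh (fun n => hnx n (hh n))
  have hz : IsZero H.H := H.isZero (isTestFamily_PP R) (by
    intro m n
    refine ⟨n + m.natAbs + 1, by omega, fun z => ?_⟩
    exact PP_smod_zero _ _ m (by omega) z)
  have h0 : e0.hom ≫ g = 0 := by
    have : H.j 0 ≫ h' = e0.hom ≫ g := hh' 0
    rw [← this, hz.eq_of_src h' 0, comp_zero]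
  rw [← cancel_epi e0.hom, h0, comp_zero]

end StepA

section StepB

open DerivedCategory

variable {R : Type u} [CommRing R] [HasDerivedCategory.{w'} (ModuleCat.{u} R)]

/-- The module is annihilated by the members of the list. -/
def KilledL (l : List R) (M : ModuleCat.{u} R) : Prop := ∀ a ∈ l, ∀ x : M, a • x = 0

/-- Shifts of modules annihilated by the members of the list. -/
def CL (l : List R) : Set (DerivedCategory (ModuleCat.{u} R)) :=
  {X | ∃ M : ModuleCat.{u} R, KilledL l M ∧ ∃ k : ℤ, Nonempty (X ≅ (smod R M)⟦k⟧)}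

lemma CL_shift (l : List R) (n : ℤ) {x : DerivedCategory (ModuleCat.{u} R)} (hx : x ∈ CL l) :
    x⟦n⟧ ∈ CL l := by
  obtain ⟨M, hM, k, ⟨e⟩⟩ := hx
  exact ⟨M, hM, k + n, ⟨((shiftFunctor _ n).mapIso e).trans
    ((shiftFunctorAdd (DerivedCategory (ModuleCat.{u} R)) k n).app (smod R M)).symm⟩⟩

lemma smod_mem_CL (l : List R) (M : ModuleCat.{u} R) (hM : KilledL l M) : smod R M ∈ CL l :=
  ⟨M, hM, 0, ⟨((shiftFunctorZero (DerivedCategory (ModuleCat.{u} R)) ℤ).app (smod R M)).symm⟩⟩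

lemma f_bij (l : List R) (f : R) (M : ModuleCat.{u} R) (hM : KilledL l M)
    (E : DerivedCategory (ModuleCat.{u} R)) (hE : E ∈ rightOrth (CL (f :: l))) :
    (∀ k : smod R M ⟶ E, f • k = 0 → k = 0) ∧ (∀ k : smod R M ⟶ E, ∃ k', f • k' = k) := by
  let φ : M →ₗ[R] M := LinearMap.lsmul R M f
  have hφ : ∀ x, φ x = f • x := fun x => rfl
  let i1 : ModuleCat.of R (LinearMap.ker φ) ⟶ M := ModuleCat.ofHom (LinearMap.ker φ).subtype
  let p1 : M ⟶ ModuleCat.of R (LinearMap.range φ) := ModuleCat.ofHom φ.rangeRestrict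
  let i2 : ModuleCat.of R (LinearMap.range φ) ⟶ M := ModuleCat.ofHom (LinearMap.range φ).subtype
  let p2 : M ⟶ ModuleCat.of R (M ⧸ LinearMap.range φ) := ModuleCat.ofHom (LinearMap.range φ).mkQ
  have hA : KilledL (f :: l) (ModuleCat.of R (LinearMap.ker φ)) := by
    intro a ha x
    apply Subtype.ext
    change a • x.1 = 0
    rcases List.mem_cons.1 ha with rfl | ha
    · exact x.2
    · exact hM a ha _
  have hQ : KilledL (f :: l) (ModuleCat.of R (M ⧸ LinearMap.range φ)) := by
    intro a ha x
    obtain ⟨y, rfl⟩ := Submodule.Quotient.mk_surjective _ x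
    rw [← Submodule.Quotient.mk_smul]
    refine (Submodule.Quotient.mk_eq_zero _).2 ?_
    rcases List.mem_cons.1 ha with rfl | ha
    · exact ⟨y, rfl⟩
    · rw [hM a ha]; exact Submodule.zero_mem _
  obtain ⟨δ1, h1⟩ := ses_triangle i1 p1 (LinearMap.ker φ).injective_subtype
    φ.surjective_rangeRestrict (fun y => ⟨fun h => ⟨⟨y, congrArg Subtype.val h⟩, rfl⟩, by
      rintro ⟨x, rfl⟩
      exact Subtype.ext x.2⟩)
  obtain ⟨δ2, h2⟩ := ses_triangle i2 p2 (LinearMap.range φ).injective_subtype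
    (LinearMap.range φ).mkQ_surjective (fun y =>
      ⟨fun h => ⟨⟨y, (Submodule.Quotient.mk_eq_zero _).1 h⟩, rfl⟩, by
      rintro ⟨x, rfl⟩
      exact (Submodule.Quotient.mk_eq_zero _).2 x.2⟩)
  have hcomp : p1 ≫ i2 = f • 𝟙 M := rfl
  have hsm : ∀ k : smod R M ⟶ E, f • k = smap p1 ≫ smap i2 ≫ k := by
    intro k
    rw [← Category.assoc, ← smap_comp, hcomp, smap_smul, smap_id, Linear.smul_comp,
      Category.id_comp]
  have mA := smod_mem_CL _ _ hA
  have mQ := smod_mem_CL _ _ hQ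
  constructor
  · intro k hk
    rw [hsm] at hk
    obtain ⟨v, hv⟩ := dt_y₃ h1 _ hk
    rw [hE (CL_shift _ 1 mA) v, comp_zero] at hv
    obtain ⟨w, hw⟩ := dt_y₂ h2 _ hv
    rw [hw, hE mQ w, comp_zero]
  · intro k
    obtain ⟨v, hv⟩ := dt_y₂ h1 k (hE mA _)
    obtain ⟨t, ht⟩ := Triangle.yoneda_exact₂ _ (inv_rot_of_distTriang _ h2) v
      (hE (CL_shift _ (-1) mQ) _)
    refine ⟨t, ?_⟩
    have ht' : v = smap i2 ≫ (show smod R M ⟶ E from t) := ht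
    exact (hsm _).trans ((congrArg (fun z => smap p1 ≫ z) ht'.symm).trans hv.symm)

lemma f_bij_shift (l : List R) (f : R) (X : DerivedCategory (ModuleCat.{u} R)) (hX : X ∈ CL l)
    (E : DerivedCategory (ModuleCat.{u} R)) (hE : E ∈ rightOrth (CL (f :: l))) :
    (∀ k : X ⟶ E, f • k = 0 → k = 0) ∧ (∀ k : X ⟶ E, ∃ k', f • k' = k) := by
  obtain ⟨M, hM, n, ⟨e⟩⟩ := hX
  have hE' := rightOrth_shift (fun n _ h => CL_shift (f :: l) n h) (-n) hE
  obtain ⟨h1, h2⟩ := f_bij l f M hM _ hE'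
  have hs : ∀ k : (smod R M)⟦n⟧ ⟶ E, (f • 𝟙 (smod R M))⟦n⟧' ≫ k = f • k := fun k => by
    rw [Functor.map_smul, CategoryTheory.Functor.map_id, Linear.smul_comp, Category.id_comp]
  constructor
  · intro k hk
    have := shift_pre_inj (f • 𝟙 (smod R M)) n (B := E) (fun k hk => h1 k (by
      rwa [Linear.smul_comp, Category.id_comp] at hk)) (e.inv ≫ k) (by
      rw [hs, ← Linear.comp_smul, hk, comp_zero])
    rw [← cancel_epi e.inv, this, comp_zero]
  · intro k
    obtain ⟨k', hk'⟩ := shift_pre_surj (f • 𝟙 (smod R M)) n (B := E) (fun k => by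
      obtain ⟨k', hk'⟩ := h2 k
      exact ⟨k', by rw [Linear.smul_comp, Category.id_comp, hk']⟩) (e.inv ≫ k)
    rw [hs] at hk'
    exact ⟨e.hom ≫ k', by rw [← Linear.comp_smul, hk', Iso.hom_inv_id_assoc]⟩

lemma isZero_of_CL (l : List R) (B : DerivedCategory (ModuleCat.{u} R))
    (ht : ∀ f ∈ l, B ∈ torsSet (DerivedCategory (ModuleCat.{u} R)) f)
    (hB : B ∈ rightOrth (CL l)) : IsZero B := by
  induction l generalizing B with
  | nil =>
    apply PP_zero
    intro m g
    refine hB ⟨ModuleCat.of R R, fun a ha => by simp at ha, -m, ?_⟩ g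
    refine ⟨?_⟩
    refine Iso.trans ?_ (sShift R (ModuleCat.of R R) (-m) m 0 (by simp)).symm
    exact ((SingleFunctors.evaluation _ _ m).mapIso
      (singleFunctorsPostcompQIso (ModuleCat.{u} R)) |>.app (ModuleCat.of R R)).symm
  | cons f l ih =>
    obtain ⟨B', b, c, hT⟩ := distinguished_cocone_triangle (f • 𝟙 B)
    have hB1 := rightOrth_shift (fun n _ h => CL_shift (f :: l) n h) 1 hB
    have hz : IsZero B' := by
      apply ih
      · intro a ha
        have := ht a (List.mem_cons_of_mem _ ha)
        exact (isLocalizingSub_torsSet.{u} a).cone_mem _ hT this this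
      · intro X hX g
        have hc : g ≫ c = 0 := by
          apply (f_bij_shift l f X hX _ hB1).1
          have h31 := dt₃₁ hT
          rw [Functor.map_smul, CategoryTheory.Functor.map_id, Linear.comp_smul,
            Category.comp_id] at h31
          rw [← Linear.comp_smul, h31, comp_zero]
        obtain ⟨g1, hg1⟩ := dt_c₃ hT g hc
        obtain ⟨g2, hg2⟩ := (f_bij_shift l f X hX _ hB).2 g1
        have : g1 = g2 ≫ (f • 𝟙 B) := by rw [Linear.comp_smul, Category.comp_id, hg2]
        rw [hg1, this, Category.assoc, dt₁₂ hT, comp_zero]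
    have : IsIso (f • 𝟙 B) := (Triangle.isZero₃_iff_isIso₁ _ hT).1 hz
    exact isZero_of_inv_tors this (ht f List.mem_cons_self)

lemma isZero_of_VV (l : List R) (I : Ideal R) (hI : I = Ideal.span {a | a ∈ l})
    (B : DerivedCategory (ModuleCat.{u} R))
    (ht : ∀ f ∈ l, B ∈ torsSet (DerivedCategory (ModuleCat.{u} R)) f)
    (hB : B ∈ VV I) : IsZero B := by
  apply isZero_of_CL l B ht
  rintro X ⟨M, hM, k, ⟨e⟩⟩ g
  have hK : Killed I M := by
    intro a ha x
    have : I ≤ Module.annihilator R M := by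
      rw [hI, Ideal.span_le]
      intro b hb
      exact Module.mem_annihilator.2 (fun x => hM b hb x)
    exact Module.mem_annihilator.1 (this ha) x
  have := hom_zero_shift (C := VV I) (fun n _ h => VV_shift I n h) (X := smod R M)
    (fun Y hY g => killed_hom_zero I M hK Y hY g) k hB (e.inv ≫ g)
  rw [← cancel_epi e.inv, this, comp_zero]

lemma quot_tors (I : Ideal R) (f : R) (hf : f ∈ I) :
    Loc.{u} {smod R (ModuleCat.of R (R ⧸ I))} ⊆ torsSet (DerivedCategory (ModuleCat.{u} R)) f := by
  apply Loc_subset (isLocalizingSub_torsSet.{u} f)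
  rintro _ rfl
  apply mem_torsSet_of_smul
  rw [← smap_id, ← smap_smul]
  have : f • 𝟙 (ModuleCat.of R (R ⧸ I)) = 0 := by
    apply ModuleCat.hom_ext
    apply LinearMap.ext
    intro x
    obtain ⟨y, rfl⟩ := Submodule.Quotient.mk_surjective I x
    exact (Submodule.Quotient.mk_eq_zero I).2 (I.mul_mem_right _ hf)
  rw [this, smap_zero]

lemma main_aux (l : List R) (I : Ideal R) (hI : I = Ideal.span {a | a ∈ l}) :
    VV I = Loc.{u} {x : DerivedCategory (ModuleCat.{u} R) | ∃ f ∈ l,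
      x = smod R (ModuleCat.of R (Localization.Away f))} := by
  have hmem : ∀ f ∈ l, f ∈ I := fun f hf => hI ▸ Ideal.subset_span hf
  apply Set.Subset.antisymm
  · intro Y hY
    have hF : Y ∈ Filt (DerivedCategory (ModuleCat.{u} R)) l := by
      refine mem_Filt.{u} l Set.univ (VV I) ⟨trivial, fun _ _ => trivial, fun _ _ _ => trivial,
        fun _ _ _ _ => trivial, fun _ _ _ _ => trivial⟩ ?_ ?_ ?_ Y trivial hY
      · intro Tr hTr h2 h3
        exact rightOrth_mem₁ (fun n _ h => Loc_shift _ n h) Tr hTr h2 h3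
      · intro f hf E hE X hX g
        exact quot_tors I f (hmem f hf) hX E hE g
      · intro B _ hB ht
        exact isZero_of_VV l I hI B ht hB
    refine Filt_subset (isLocalizingSub_Loc.{u} _) l ?_ hF
    intro f hf
    exact invSet_subset_loc f (isLocalizingSub_Loc.{u} _) (subset_Loc _ ⟨f, hf, rfl⟩)
  · refine Set.Subset.trans (Loc_subset (isLocalizingSub_Wset.{u} l) ?_) ?_
    · rintro _ ⟨f, hf, rfl⟩
      exact invSet_subset_Wset l f hf (loc_main f).2
    · intro Y hY X hX g
      exact hY (fun f hf => quot_tors I f (hmem f hf) hX) g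

end StepB

/-- Theorem: for a finitely generated ideal `I = (f₁, …, fₙ)` of `R`, one has
`Loc(R/I)^⊥ = Loc(R_{f₁}, …, R_{fₙ})` in `D(R)`. -/
theorem rightOrth_loc_quotient_eq_loc_localizations (R : Type u) [CommRing R]
    [HasDerivedCategory.{w'} (ModuleCat.{u} R)] (n : ℕ) (f : Fin n → R) :
    rightOrth (Loc.{u} {smod R (ModuleCat.of R (R ⧸ Ideal.span (Set.range f)))}) =
      Loc.{u} {x | ∃ i : Fin n,
        x = smod R (ModuleCat.of R (Localization.Away (f i)))} := by
  have hl : ∀ a : R, a ∈ List.ofFn f ↔ ∃ i, f i = a := fun a => by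
    rw [List.mem_ofFn]
  have h := main_aux (List.ofFn f) (Ideal.span (Set.range f)) (by
    congr 1
    ext a
    exact (hl a).symm)
  refine h.trans (congrArg _ ?_)
  ext x
  constructor
  · rintro ⟨a, ha, rfl⟩
    obtain ⟨i, rfl⟩ := (hl a).1 ha
    exact ⟨i, rfl⟩
  · rintro ⟨i, rfl⟩
    exact ⟨f i, (hl _).2 ⟨i, rfl⟩, rfl⟩
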